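/- arXiv:2104.12105 — 4 statements merged into one kernel-verified Lean document; each statement's English description precedes it below -/
import Mathlib

section
/- Let k be a perfect field of characteristic p. For every n ≥ 0, p is a non-zero-divisor on the quotient ring W(k)⟦X⟧/(E_n); that is, W(k)⟦X⟧/(E_n) has no p-torsion. -/
open PowerSeries

/-- Let `k` be a perfect field of characteristic `p`.  For every `n ≥ 0`, `p` is a
non-zero-divisor on `W(k)⟦X⟧/(E_n)`, where `E_n = ∑_{i=0}^{p-1} (1+X)^(i p^n)`;
that is, this quotient ring has no `p`-torsion. -/
theorem quotient_En_p_torsionfree (p : ℕ) [Fact p.Prime] (k : Type*) [Field k] [CharP k p]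
    [PerfectRing k p] (n : ℕ)
    (x : PowerSeries (WittVector p k) ⧸
      Ideal.span {∑ i ∈ Finset.range p,
        (1 + X : PowerSeries (WittVector p k)) ^ (i * p ^ n)})
    (hx : (p : PowerSeries (WittVector p k) ⧸
      Ideal.span {∑ i ∈ Finset.range p,
        (1 + X : PowerSeries (WittVector p k)) ^ (i * p ^ n)}) * x = 0) :
    x = 0 := by
  have hpp : p.Prime := Fact.out
  obtain ⟨f, rfl⟩ := Ideal.Quotient.mk_surjective x
  have hpf : (p : PowerSeries (WittVector p k)) * f ∈ Ideal.span {∑ i ∈ Finset.range p,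
        (1 + X : PowerSeries (WittVector p k)) ^ (i * p ^ n)} := by
    rw [← Ideal.Quotient.eq_zero_iff_mem, map_mul, map_natCast]
    exact hx
  rw [Ideal.Quotient.eq_zero_iff_mem, Ideal.mem_span_singleton]
  obtain ⟨g, hg⟩ := Ideal.mem_span_singleton.1 hpf
  -- reduce modulo `p`
  have hred := congrArg (PowerSeries.map (WittVector.constantCoeff (p := p) (R := k))) hg
  have hE : (∑ i ∈ Finset.range p, (1 + X : PowerSeries k) ^ (i * p ^ n)) ≠ 0 := by
    intro h0
    have hgeom := geom_sum_mul ((1 + X : PowerSeries k) ^ p ^ n) p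
    simp only [← pow_mul] at hgeom
    simp only [mul_comm _ (p ^ n)] at h0
    haveI : CharP (PowerSeries k) p :=
      charP_of_injective_ringHom (PowerSeries.C_injective (R := k)) p
    rw [h0, zero_mul, ← pow_succ, add_pow_char_pow, one_pow, add_sub_cancel_left] at hgeom
    exact pow_ne_zero _ PowerSeries.X_ne_zero hgeom.symm
  simp only [map_mul, map_natCast, map_sum, map_pow, map_add, map_one, PowerSeries.map_X] at hred
  have hp0 : (p : PowerSeries k) = 0 := by
    rw [← map_natCast (PowerSeries.C (R := k)), CharP.cast_eq_zero, map_zero]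
  rw [hp0, zero_mul] at hred
  have hgbar := (mul_eq_zero.1 hred.symm).resolve_left hE
  have hdiv : ∀ m, ∃ b : WittVector p k, PowerSeries.coeff m g = p * b := by
    intro m
    by_cases ha : PowerSeries.coeff m g = 0
    · exact ⟨0, by simp [ha]⟩
    obtain ⟨r, b, hb, hab⟩ := WittVector.exists_eq_pow_p_mul _ ha
    cases r with
    | zero =>
      exfalso
      apply hb
      have h1 := congrArg (PowerSeries.coeff m) hgbar
      rw [PowerSeries.coeff_map, hab] at h1
      simpa using h1
    | succ r => exact ⟨p ^ r * b, by rw [hab, pow_succ']; ring⟩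
  choose b hb using hdiv
  have hgp : g = (p : PowerSeries (WittVector p k)) * PowerSeries.mk b := by
    ext1 m
    rw [← map_natCast (PowerSeries.C (R := WittVector p k)), PowerSeries.coeff_C_mul,
      PowerSeries.coeff_mk, hb]
  refine ⟨PowerSeries.mk b, ?_⟩
  have hpne : (p : PowerSeries (WittVector p k)) ≠ 0 := by
    rw [← map_natCast (PowerSeries.C (R := WittVector p k))]
    exact (map_ne_zero_iff _ PowerSeries.C_injective).2 (WittVector.p_nonzero p k)
  apply mul_left_cancel₀ hpne
  rw [hg, hgp]
  ring
end

section
/- Let k be a perfect field of characteristic p. For every n ≥ 0 and every positive integer a coprime to p, the ideal of W(k)⟦X⟧ generated by ∑_{i=0}^{p−1} (1+X)^{i a p^n} equals the ideal generated by E_n = ∑_{i=0}^{p−1} (1+X)^{i p^n}. -/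
open PowerSeries

/-- The identity `S(a) * u = S(1) * v` in any commutative ring. -/
theorem twist_identity {R : Type*} [CommRing R] (Q : R) (p a : ℕ) :
    (∑ i ∈ Finset.range p, (Q ^ a) ^ i) * (∑ j ∈ Finset.range a, Q ^ j) =
      (∑ i ∈ Finset.range p, Q ^ i) * (∑ j ∈ Finset.range a, (Q ^ p) ^ j) := by
  have key : (∑ i ∈ Finset.range p, ((Polynomial.X : Polynomial ℤ) ^ a) ^ i) *
        (∑ j ∈ Finset.range a, Polynomial.X ^ j) =
      (∑ i ∈ Finset.range p, Polynomial.X ^ i) *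
        (∑ j ∈ Finset.range a, (Polynomial.X ^ p) ^ j) := by
    have h0 : (Polynomial.X - 1 : Polynomial ℤ) ≠ 0 := by
      simpa using Polynomial.X_sub_C_ne_zero (1 : ℤ)
    apply mul_right_cancel₀ h0
    rw [mul_assoc, geom_sum_mul, geom_sum_mul, mul_right_comm, geom_sum_mul, mul_comm,
      geom_sum_mul, ← pow_mul, ← pow_mul, mul_comm a p]
  simpa using congrArg (Polynomial.aeval Q) key

theorem isUnit_geom_aux (p : ℕ) [Fact p.Prime] (k : Type*) [Field k] [CharP k p]
    (a m : ℕ) (hcop : Nat.Coprime a p) :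
    IsUnit (∑ j ∈ Finset.range a, ((1 + X : PowerSeries (WittVector p k)) ^ m) ^ j) := by
  rw [PowerSeries.isUnit_iff_constantCoeff]
  have h : PowerSeries.constantCoeff
      (∑ j ∈ Finset.range a, ((1 + X : PowerSeries (WittVector p k)) ^ m) ^ j) = (a : WittVector p k) := by
    simp
  rw [h]
  apply WittVector.isUnit_of_coeff_zero_ne_zero
  have h2 : (a : WittVector p k).coeff 0 = (a : k) :=
    map_natCast (WittVector.constantCoeff : WittVector p k →+* k) a
  rw [h2, Ne, CharP.cast_eq_zero_iff k p]
  intro hd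
  have hp : p.Prime := Fact.out
  exact (hp.coprime_iff_not_dvd.mp hcop.symm) hd

/-- Let `k` be a perfect field of characteristic `p`.  For every `n ≥ 0` and every positive
integer `a` coprime to `p`, the ideal of `W(k)⟦X⟧` generated by
`∑_{i=0}^{p-1} (1+X)^(i a p^n)` equals the ideal generated by
`E_n = ∑_{i=0}^{p-1} (1+X)^(i p^n)`. -/
theorem span_En_twist_eq (p : ℕ) [Fact p.Prime] (k : Type*) [Field k] [CharP k p]
    [PerfectRing k p] (n a : ℕ) (ha : 0 < a) (hcop : Nat.Coprime a p) :
    Ideal.span {∑ i ∈ Finset.range p,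
        (1 + X : PowerSeries (WittVector p k)) ^ (i * (a * p ^ n))} =
      Ideal.span {∑ i ∈ Finset.range p,
        (1 + X : PowerSeries (WittVector p k)) ^ (i * p ^ n)} := by

  have h := twist_identity ((1 + X : PowerSeries (WittVector p k)) ^ (p ^ n)) p a
  have hu := isUnit_geom_aux p k a (p ^ n) hcop
  have hv := isUnit_geom_aux p k a (p ^ n * p) hcop
  have e1 : ∑ i ∈ Finset.range p, (1 + X : PowerSeries (WittVector p k)) ^ (i * (a * p ^ n)) =
      ∑ i ∈ Finset.range p, (((1 + X : PowerSeries (WittVector p k)) ^ (p ^ n)) ^ a) ^ i :=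
    Finset.sum_congr rfl fun i _ => by rw [← pow_mul, ← pow_mul]; congr 1; ring
  have e2 : ∑ i ∈ Finset.range p, (1 + X : PowerSeries (WittVector p k)) ^ (i * p ^ n) =
      ∑ i ∈ Finset.range p, ((1 + X : PowerSeries (WittVector p k)) ^ (p ^ n)) ^ i :=
    Finset.sum_congr rfl fun i _ => by rw [← pow_mul]; congr 1; ring
  rw [pow_mul] at hv
  rw [e1, e2, ← Ideal.span_singleton_mul_right_unit hu, h,
    Ideal.span_singleton_mul_right_unit hv]
end

section
/- Let R be a commutative ring equipped with a ring endomorphism φ, and let R_∞ := colim_φ R be the direct limit of the system R →φ R →φ R →φ ⋯, with its induced endomorphism. Then base change along the canonical ring homomorphism R → R_∞ induces an equivalence from the category of étale φ-modules over R to the category of étale φ-modules over R_∞. -/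
universe u

/-- An étale `φ`-module over a commutative ring `R` equipped with a ring endomorphism
`φ`: a finitely generated projective `R`-module `M` together with an isomorphism
`F : φ*M = M ⊗_{R,φ} R ≃ M`.  The isomorphism is encoded by the `φ`-semilinear map
`frob = F ∘ (m ↦ m ⊗ 1)`, and the requirement that `F` be an isomorphism is encoded by
the universal property `etale`: precomposition with `frob` identifies `R`-linear maps
out of `carrier` with `φ`-semilinear maps out of `carrier`. -/
structure EtaleModuleOver (R : Type u) [CommRing R] (φ : R →+* R) : Type (u + 1) where
  carrier : Type u
  [acg : AddCommGroup carrier]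
  [mod : Module R carrier]
  finite : Module.Finite R carrier
  projective : Module.Projective R carrier
  frob : carrier →ₛₗ[φ] carrier
  etale : ∀ (T : Type u) [AddCommGroup T] [Module R T] (g : carrier →ₛₗ[φ] T),
    ∃! h : carrier →ₗ[R] T, ∀ m, h (frob m) = g m

attribute [instance] EtaleModuleOver.acg EtaleModuleOver.mod

/-- `b : M → N` exhibits the `S`-module `N` as the base change `S ⊗_R M` of the
`R`-module `M` along the ring homomorphism `ι : R → S`, via the universal property of
base change. -/
def IsBaseChangeAlong {R S : Type u} [CommRing R] [CommRing S] (ι : R →+* S)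
    (M : Type u) [AddCommGroup M] [Module R M]
    (N : Type u) [AddCommGroup N] [Module S N] (b : M →ₛₗ[ι] N) : Prop :=
  ∀ (T : Type u) [AddCommGroup T] [Module S T] (u : M →ₛₗ[ι] T),
    ∃! v : N →ₗ[S] T, ∀ m, v (b m) = u m

namespace PhiAux

section ring
variable {R S : Type u} [CommRing R] [CommRing S]
    {φ : R →+* R} {φS : S →+* S} {ι : ℕ → (R →+* S)}

theorem ker_iter
    (hUP : ∀ (T : Type u) [CommRing T] (u : ℕ → (R →+* T)),
      (∀ n, (u (n + 1)).comp φ = u n) → ∃! v : S →+* T, ∀ n, v.comp (ι n) = u n)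
    (r : R) (hr : ι 0 r = 0) : ∃ k, φ^[k] r = 0 := by
  let u : ℕ → (R →+* Filter.Germ (Filter.atTop : Filter ℕ) R) := fun n =>
    (Filter.Germ.coeRingHom (Filter.atTop : Filter ℕ)).comp (RingHom.pi fun m => φ ^ (m - n))
  obtain ⟨v, hv, -⟩ := hUP _ u (by
    intro n
    ext r
    change Filter.Germ.ofFun (fun m => (φ ^ (m - (n+1))) (φ r))
      = (Filter.Germ.ofFun (fun m => (φ ^ (m - n)) r) : Filter.Germ Filter.atTop R)
    rw [Filter.Germ.coe_eq]
    filter_upwards [Filter.eventually_ge_atTop (n+1)] with m hm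
    have : m - n = (m - (n+1)) + 1 := by omega
    rw [this, pow_succ]
    rfl)
  have h := RingHom.congr_fun (hv 0) r
  rw [RingHom.comp_apply, hr, map_zero] at h
  change Filter.Germ.ofFun (fun m => 0)
      = (Filter.Germ.ofFun (fun m => (φ ^ (m - 0)) r) : Filter.Germ Filter.atTop R) at h
  rw [Filter.Germ.coe_eq] at h
  obtain ⟨k, hk⟩ := h.exists
  refine ⟨k, ?_⟩
  rw [← RingHom.coe_pow]
  simpa using hk.symm

theorem surj_iter
    (hι : ∀ n, (ι (n + 1)).comp φ = ι n)
    (hUP : ∀ (T : Type u) [CommRing T] (u : ℕ → (R →+* T)),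
      (∀ n, (u (n + 1)).comp φ = u n) → ∃! v : S →+* T, ∀ n, v.comp (ι n) = u n)
    (hφS : ∀ n, φS.comp (ι n) = (ι n).comp φ) (s : S) :
    ∃ k r, φS^[k] s = ι 0 r := by
  have hmono : Monotone (fun n => (ι n).range) := by
    refine monotone_nat_of_le_succ fun n => ?_
    rintro _ ⟨r, rfl⟩
    exact ⟨φ r, RingHom.congr_fun (hι n) r⟩
  let S' : Subring S := ⨆ n, (ι n).range
  have hle : ∀ n, (ι n).range ≤ S' := fun n => le_iSup (fun n => (ι n).range) n
  let u : ℕ → (R →+* S') := fun n => (ι n).codRestrict S' (fun r => hle n ⟨r, rfl⟩)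
  obtain ⟨v, hv, -⟩ := hUP _ u (by
    intro n
    ext r
    exact RingHom.congr_fun (hι n) r)
  obtain ⟨w, hw, hu⟩ := hUP S ι hι
  have h1 : S'.subtype.comp v = RingHom.id S := by
    rw [hu (S'.subtype.comp v), hu (RingHom.id S)]
    · intro n; rfl
    · intro n
      rw [RingHom.comp_assoc, hv n]
      rfl
  have hs : s ∈ S' := by
    have := RingHom.congr_fun h1 s
    simp only [RingHom.comp_apply, RingHom.id_apply] at this
    rw [← this]
    exact (v s).2
  obtain ⟨n, r, rfl⟩ := (Subring.mem_iSup_of_directed hmono.directed_le).1 hs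
  refine ⟨n, r, ?_⟩
  clear hs
  induction n with
  | zero => rfl
  | succ n ih =>
    rw [Function.iterate_succ_apply, ← ih]
    congr 1
    rw [← RingHom.comp_apply, hφS, hι]

theorem iota_iter (hφS : ∀ n, φS.comp (ι n) = (ι n).comp φ) (k : ℕ) (r : R) :
    φS^[k] (ι 0 r) = ι 0 (φ^[k] r) := by
  induction k generalizing r with
  | zero => rfl
  | succ k ih =>
    rw [Function.iterate_succ_apply, Function.iterate_succ_apply, ← ih, ← RingHom.comp_apply, hφS]
    rfl

end ring

/-- Uniformize an upward closed existential over a finite type. -/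
theorem uniform {α : Type*} [Finite α] {P : α → ℕ → Prop}
    (hP : ∀ a k, P a k → P a (k+1)) (h : ∀ a, ∃ k, P a k) : ∃ k, ∀ a, P a k := by
  have hm : ∀ a k l, k ≤ l → P a k → P a l := by
    intro a k l hkl hk
    induction hkl with
    | refl => exact hk
    | step _ ih => exact hP _ _ ih
  choose k hk using h
  have := Fintype.ofFinite α
  exact ⟨Finset.univ.sup k, fun a => hm a _ _ (Finset.le_sup (Finset.mem_univ a)) (hk a)⟩

section mods
variable {R : Type u} [CommRing R] {φ : R →+* R}

theorem frob_iter_sum (M : EtaleModuleOver R φ) {n : ℕ} (k : ℕ) (r : Fin n → R)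
    (y : Fin n → M.carrier) :
    M.frob^[k] (∑ i, r i • y i) = ∑ i, φ^[k] (r i) • M.frob^[k] (y i) := by
  induction k generalizing r y with
  | zero => rfl
  | succ k ih =>
    simp only [Function.iterate_succ_apply, map_sum, map_smulₛₗ, ih]

theorem frob_iter_smul (M : EtaleModuleOver R φ) (k : ℕ) (r : R)
    (y : M.carrier) :
    M.frob^[k] (r • y) = φ^[k] r • M.frob^[k] y := by
  induction k generalizing r y with
  | zero => rfl
  | succ k ih =>
    simp only [Function.iterate_succ_apply, map_smulₛₗ, ih]

/-- Dual basis together with Frobenius twisted functionals. -/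
def Data (M : EtaleModuleOver R φ) {n : ℕ} (x : Fin n → M.carrier)
    (f g : Fin n → (M.carrier →ₗ[R] R)) : Prop :=
  (∀ y, ∑ i, f i y • x i = y) ∧ ∀ i y, g i (M.frob y) = φ (f i y)

theorem exists_twist (M : EtaleModuleOver R φ) (f : M.carrier →ₗ[R] R) :
    ∃ g : M.carrier →ₗ[R] R, ∀ y, g (M.frob y) = φ (f y) := by
  let q : M.carrier →ₛₗ[φ] R :=
    { toFun := fun y => φ (f y)
      map_add' := by intros; simp
      map_smul' := by intros; simp }
  exact (M.etale R q).exists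

theorem exists_data (M : EtaleModuleOver R φ) :
    ∃ (n : ℕ) (x : Fin n → M.carrier) (f g : Fin n → (M.carrier →ₗ[R] R)), Data M x f g := by
  have := M.finite
  have := M.projective
  obtain ⟨n, p, i, hp, hi, hpi⟩ := Module.Finite.exists_comp_eq_id_of_projective R M.carrier
  have := fun j => exists_twist M ((LinearMap.proj j).comp i)
  choose g hg using this
  refine ⟨n, fun j => p (Pi.single j 1), fun j => (LinearMap.proj j).comp i, g, ?_, hg⟩
  intro y
  have h2 : p (i y) = y := LinearMap.congr_fun hpi y
  conv_rhs => rw [← h2, LinearMap.pi_apply_eq_sum_univ p (i y)]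
  refine Finset.sum_congr rfl fun j _ => ?_
  have : (Pi.single j 1 : Fin n → R) = fun l => if j = l then 1 else 0 := by
    ext l
    simp [Pi.single_apply, eq_comm]
  change i y j • p (Pi.single j 1) = _
  rw [this]

theorem Data.span {M : EtaleModuleOver R φ} {n : ℕ} {x : Fin n → M.carrier}
    {f g : Fin n → (M.carrier →ₗ[R] R)} (h : Data M x f g) (y : M.carrier) :
    ∑ i, g i y • M.frob (x i) = y := by
  let h1 : M.carrier →ₗ[R] M.carrier := ∑ i, (g i).smulRight (M.frob (x i))
  have h1a : ∀ y, h1 y = ∑ i, g i y • M.frob (x i) := by intro y; simp [h1]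
  have : h1 = LinearMap.id := by
    refine (M.etale M.carrier M.frob).unique ?_ (fun _ => rfl)
    intro m
    rw [h1a]
    conv_rhs => rw [← h.1 m]
    simp [h.2]
  rw [← h1a, this]; rfl

theorem Data.iter {M : EtaleModuleOver R φ} {n : ℕ} {x : Fin n → M.carrier}
    {f g : Fin n → (M.carrier →ₗ[R] R)} (h : Data M x f g) (k : ℕ) :
    ∃ f' g', Data M (fun i => M.frob^[k] (x i)) f' g' ∧
      (∀ i y, f' i (M.frob^[k] y) = φ^[k] (f i y)) ∧
      (∀ i y, g' i (M.frob^[k] y) = φ^[k] (g i y)) := by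
  induction k with
  | zero => exact ⟨f, g, h, fun _ _ => rfl, fun _ _ => rfl⟩
  | succ k ih =>
    obtain ⟨f', g', hd, hf, hg⟩ := ih
    choose g2 hg2 using fun i => exists_twist M (g' i)
    refine ⟨g', g2, ⟨?_, hg2⟩, ?_, ?_⟩
    · intro y
      simp only [Function.iterate_succ_apply']
      exact hd.span y
    · intro i y
      simp only [Function.iterate_succ_apply', hd.2, hf]
    · intro i y
      simp only [Function.iterate_succ_apply', hg2, hg]

end mods

section construct
variable {R : Type u} [CommRing R] {φ : R →+* R}
open Matrix

/-- Relations on the matrices presenting an étale module. -/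
structure Rel (φ : R →+* R) {n : ℕ} (e a b : Matrix (Fin n) (Fin n) R) : Prop where
  ee : e * e = e
  ea : e * a = a
  ae : a * e.map φ = a
  be : b * e = b
  ab : a * b = e
  ba : b * a = e.map φ

theorem map_mulVec' {A B : Type*} [CommRing A] [CommRing B] (ψ : A →+* B) {n : ℕ}
    (e : Matrix (Fin n) (Fin n) A) (m : Fin n → A) :
    (fun i => ψ ((e *ᵥ m) i)) = e.map ψ *ᵥ (fun i => ψ (m i)) := by
  ext i
  simp [Matrix.mulVec, dotProduct]

theorem mem_fix {n : ℕ} {e a b : Matrix (Fin n) (Fin n) R} (h : Rel φ e a b)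
    (m : LinearMap.range e.mulVecLin) : e *ᵥ m.1 = m.1 := by
  obtain ⟨_, y, rfl⟩ := m
  simp [h.ee]

/-- The Frobenius on the image of the idempotent. -/
def mkFrob {n : ℕ} {e a b : Matrix (Fin n) (Fin n) R} (h : Rel φ e a b) :
    LinearMap.range e.mulVecLin →ₛₗ[φ] LinearMap.range e.mulVecLin where
  toFun m := ⟨a *ᵥ (fun i => φ (m.1 i)), ⟨a *ᵥ (fun i => φ (m.1 i)), by simp [h.ea]⟩⟩
  map_add' x y := by
    ext1
    simp only [Submodule.coe_add, ← Matrix.mulVec_add]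
    congr 1
    ext i; simp
  map_smul' r x := by
    ext1
    simp only [Submodule.coe_smul, ← Matrix.mulVec_smul]
    congr 1
    ext i; simp

theorem mkFrob_coe {n : ℕ} {e a b : Matrix (Fin n) (Fin n) R} (h : Rel φ e a b)
    (m : LinearMap.range e.mulVecLin) : (mkFrob h m).1 = a *ᵥ (fun i => φ (m.1 i)) := rfl

/-- Standard generators of the image of `e`. -/
def gen {n : ℕ} (e : Matrix (Fin n) (Fin n) R) (j : Fin n) : LinearMap.range e.mulVecLin :=
  ⟨e *ᵥ Pi.single j 1, ⟨Pi.single j 1, rfl⟩⟩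

theorem sum_gen {n : ℕ} {e a b : Matrix (Fin n) (Fin n) R} (h : Rel φ e a b)
    (m : LinearMap.range e.mulVecLin) : ∑ j, m.1 j • gen e j = m := by
  ext i
  conv_rhs => rw [← mem_fix h m]
  simp [gen, Matrix.mulVec, dotProduct, Finset.sum_apply, mul_comm]

theorem sum_frob_gen {n : ℕ} {e a b : Matrix (Fin n) (Fin n) R} (h : Rel φ e a b)
    (m : LinearMap.range e.mulVecLin) : ∑ j, (b *ᵥ m.1) j • mkFrob h (gen e j) = m := by
  have key : ∀ j, (mkFrob h (gen e j)).1 = a *ᵥ Pi.single j 1 := by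
    intro j
    rw [mkFrob_coe]
    change a *ᵥ (fun i => φ ((e *ᵥ Pi.single j 1) i)) = _
    rw [map_mulVec', Matrix.mulVec_mulVec, h.ae]
    congr 1
    ext i
    simp [Pi.single_apply, apply_ite φ]
  have h2 : a *ᵥ (b *ᵥ m.1) = m.1 := by rw [Matrix.mulVec_mulVec, h.ab, mem_fix h]
  ext i
  conv_rhs => rw [← h2]
  simp only [Submodule.coe_sum, Submodule.coe_smul, key, Finset.sum_apply, Pi.smul_apply]
  simp only [Matrix.mulVec_single_one, Matrix.col_apply, smul_eq_mul]
  rw [Matrix.mulVec, dotProduct]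
  exact Finset.sum_congr rfl fun _ _ => mul_comm _ _

/-- The étale module presented by matrices. -/
def mk {n : ℕ} {e a b : Matrix (Fin n) (Fin n) R} (h : Rel φ e a b) :
    EtaleModuleOver R φ where
  carrier := LinearMap.range e.mulVecLin
  finite := inferInstance
  projective := by
    refine Module.Projective.of_split (LinearMap.range e.mulVecLin).subtype
      e.mulVecLin.rangeRestrict ?_
    ext1 m
    ext1
    exact mem_fix h m
  frob := mkFrob h
  etale := by
    intro T _ _ g
    refine ⟨∑ j, ((LinearMap.proj j ∘ₗ b.mulVecLin) ∘ₗ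
      (LinearMap.range e.mulVecLin).subtype).smulRight (g (gen e j)), ?_, ?_⟩
    · intro m
      have hb : b *ᵥ (mkFrob h m).1 = fun i => φ (m.1 i) := by
        rw [mkFrob_coe, Matrix.mulVec_mulVec, h.ba, ← map_mulVec', mem_fix h]
      simp only [LinearMap.sum_apply, LinearMap.smulRight_apply, LinearMap.comp_apply,
        Matrix.mulVecLin_apply, Submodule.subtype_apply, LinearMap.proj_apply, hb]
      conv_rhs => rw [← sum_gen h m]
      simp
    · intro h' hh
      ext1 m
      conv_lhs => rw [← sum_frob_gen h m]
      simp [hh]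

end construct

section main
variable {R S : Type u} [CommRing R] [CommRing S]
    {φ : R →+* R} {φS : S →+* S} {ι : ℕ → (R →+* S)}

open Matrix in
theorem ess_surj
    (hker : ∀ r : R, ι 0 r = 0 → ∃ k, φ^[k] r = 0)
    (hsurj : ∀ s : S, ∃ k r, φS^[k] s = ι 0 r)
    (hφS : ∀ n, φS.comp (ι n) = (ι n).comp φ) (N : EtaleModuleOver S φS) :
      ∃ (M : EtaleModuleOver R φ) (b : M.carrier →ₛₗ[ι 0] N.carrier),
        (∀ m, b (M.frob m) = N.frob (b m)) ∧
          IsBaseChangeAlong (ι 0) M.carrier N.carrier b := by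
  have hcomm : ∀ r, φS (ι 0 r) = ι 0 (φ r) := fun r => RingHom.congr_fun (hφS 0) r
  obtain ⟨n, x, f, g, hd⟩ := exists_data N
  obtain ⟨k, hk⟩ := uniform (α := Fin 3 × Fin n × Fin n)
    (P := fun p k => ∃ r, φS^[k] (![f p.2.1 (x p.2.2), f p.2.1 (N.frob (x p.2.2)),
      g p.2.1 (x p.2.2)] p.1) = ι 0 r) (by
      rintro p k ⟨r, hr⟩
      exact ⟨φ r, by rw [Function.iterate_succ_apply', hr, hcomm]⟩) (fun p => hsurj _)
  choose c hc using hk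
  obtain ⟨f1, g1, hd1, hf1, hg1⟩ := hd.iter k
  let e0 : Matrix (Fin n) (Fin n) R := fun i j => c (0, i, j)
  let a0 : Matrix (Fin n) (Fin n) R := fun i j => c (1, i, j)
  let b0 : Matrix (Fin n) (Fin n) R := fun i j => c (2, i, j)
  have he0 : ∀ i j, ι 0 (e0 i j) = f1 i (N.frob^[k] (x j)) := fun i j => by
    rw [hf1]; exact (hc (0, i, j)).symm
  have ha0 : ∀ i j, ι 0 (a0 i j) = f1 i (N.frob (N.frob^[k] (x j))) := fun i j => by
    rw [← Function.iterate_succ_apply' N.frob, Function.iterate_succ_apply, hf1]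
    exact (hc (1, i, j)).symm
  have hb0 : ∀ i j, ι 0 (b0 i j) = g1 i (N.frob^[k] (x j)) := fun i j => by
    rw [hg1]; exact (hc (2, i, j)).symm
  clear_value e0 a0 b0
  clear hc hf1 hg1
  generalize hx1 : (fun i => N.frob^[k] (x i)) = x1 at *
  have hx1' : ∀ i, N.frob^[k] (x i) = x1 i := fun i => by rw [← hx1]
  simp only [hx1'] at he0 ha0 hb0
  clear hx1 hx1' hd
  have lin : ∀ (q : N.carrier →ₗ[S] S) y, ∑ l, q (x1 l) * f1 l y = q y := by
    intro q y
    conv_rhs => rw [← hd1.1 y]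
    simp [mul_comm]
  have lin2 : ∀ (q : N.carrier →ₗ[S] S) y, ∑ l, q (N.frob (x1 l)) * g1 l y = q y := by
    intro q y
    conv_rhs => rw [← hd1.span y]
    simp [mul_comm]
  have lin3 : ∀ (q : N.carrier →ₗ[S] S) y, ∑ l, q (N.frob (x1 l)) * φS (f1 l y) = q (N.frob y) := by
    intro q y
    conv_rhs => rw [← hd1.1 y]
    simp [mul_comm]
  have D : ∀ u w : Matrix (Fin n) (Fin n) R, (∀ i j, ι 0 (u i j) = ι 0 (w i j)) →
      ∃ l, ∀ m, l ≤ m → u.map (φ^[m]) = w.map (φ^[m]) := by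
    intro u w h
    obtain ⟨l, hl⟩ := uniform (α := Fin n × Fin n)
      (P := fun p l => φ^[l] (u p.1 p.2) = φ^[l] (w p.1 p.2))
      (by
        intro p l h
        simp only [Function.iterate_succ_apply', h])
      (by
        intro p
        obtain ⟨l, hl⟩ := hker (u p.1 p.2 - w p.1 p.2) (by rw [map_sub, h, sub_self])
        refine ⟨l, ?_⟩
        rw [iterate_map_sub] at hl
        exact sub_eq_zero.1 hl)
    refine ⟨l, fun m hm => ?_⟩
    obtain ⟨t, rfl⟩ := Nat.exists_eq_add_of_le' hm
    ext i j
    simp only [Matrix.map_apply, Function.iterate_add_apply]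
    rw [hl (i, j)]
  obtain ⟨l1, h1⟩ := D (e0 * e0) e0 (by
    intro i j; simp only [Matrix.mul_apply, map_sum, map_mul, he0, lin])
  obtain ⟨l2, h2⟩ := D (e0 * a0) a0 (by
    intro i j; simp only [Matrix.mul_apply, map_sum, map_mul, he0, ha0, lin])
  obtain ⟨l3, h3⟩ := D (a0 * e0.map φ) a0 (by
    intro i j
    simp only [Matrix.mul_apply, map_sum, map_mul, Matrix.map_apply, ← hcomm, he0, ha0, lin3])
  obtain ⟨l4, h4⟩ := D (b0 * e0) b0 (by
    intro i j; simp only [Matrix.mul_apply, map_sum, map_mul, he0, hb0, lin])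
  obtain ⟨l5, h5⟩ := D (a0 * b0) e0 (by
    intro i j; simp only [Matrix.mul_apply, map_sum, map_mul, he0, hb0, ha0, lin2])
  obtain ⟨l6, h6⟩ := D (b0 * a0) (e0.map φ) (by
    intro i j
    simp only [Matrix.mul_apply, map_sum, map_mul, Matrix.map_apply, ← hcomm, he0, hb0, ha0, lin,
      hd1.2])
  let l := l1 + l2 + l3 + l4 + l5 + l6
  replace h1 := h1 l (by omega)
  replace h2 := h2 l (by omega)
  replace h3 := h3 l (by omega)
  replace h4 := h4 l (by omega)
  replace h5 := h5 l (by omega)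
  replace h6 := h6 l (by omega)
  clear_value l
  obtain ⟨ψ, hψ⟩ : ∃ ψ : R →+* R, ⇑ψ = φ^[l] := ⟨φ ^ l, RingHom.coe_pow φ l⟩
  have hmm : (e0.map φ).map ψ = (e0.map ψ).map φ := by
    ext i j
    simp only [Matrix.map_apply, hψ]
    rw [← Function.iterate_succ_apply, Function.iterate_succ_apply']
  simp only [← hψ, Matrix.map_mul, hmm] at h1 h2 h3 h4 h5 h6
  have hrel : Rel φ (e0.map ψ) (a0.map ψ) (b0.map ψ) :=
    ⟨h1, h2, h3, h4, h5, h6⟩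
  obtain ⟨f, g, hd, hf, hg⟩ := hd1.iter l
  have he : ∀ i j, ι 0 (e0.map ψ i j) = f i (N.frob^[l] (x1 j)) := by
    intro i j
    rw [Matrix.map_apply, hψ, ← iota_iter hφS, he0, hf]
  have ha : ∀ i j, ι 0 (a0.map ψ i j) = f i (N.frob (N.frob^[l] (x1 j))) := by
    intro i j
    rw [Matrix.map_apply, hψ, ← iota_iter hφS, ha0, ← Function.iterate_succ_apply' N.frob,
      Function.iterate_succ_apply, hf]
  generalize e0.map ψ = e at *
  generalize a0.map ψ = a at *
  generalize b0.map ψ = b at *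
  generalize hx2 : (fun i => N.frob^[l] (x1 i)) = x2 at *
  have hx2' : ∀ i, N.frob^[l] (x1 i) = x2 i := fun i => by rw [← hx2]
  simp only [hx2'] at he ha
  clear hx2 hx2'
  let β : LinearMap.range e.mulVecLin →ₛₗ[ι 0] N.carrier :=
    { toFun := fun m => ∑ j, ι 0 (m.1 j) • x2 j
      map_add' := by intro x y; simp [add_smul, Finset.sum_add_distrib]
      map_smul' := by intro r x; simp [mul_smul, Finset.smul_sum] }
  have hβ : ∀ m, β m = ∑ j, ι 0 (m.1 j) • x2 j := fun _ => rfl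
  suffices hS : (∀ m, β (mkFrob hrel m) = N.frob (β m)) ∧
      IsBaseChangeAlong (ι 0) (LinearMap.range e.mulVecLin) N.carrier β from
    ⟨mk hrel, β, hS.1, hS.2⟩
  refine ⟨?_, ?_⟩
  · intro m
    rw [hβ, hβ, mkFrob_coe]
    have : ∀ j, ι 0 ((a *ᵥ fun i => φ (m.1 i)) j) =
        ∑ i, f j (N.frob (x2 i)) * φS (ι 0 (m.1 i)) := by
      intro j
      simp only [Matrix.mulVec, dotProduct, map_sum, map_mul, ha, hcomm]
    simp only [this, map_sum, map_smulₛₗ]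
    simp only [Finset.sum_smul]
    rw [Finset.sum_comm]
    refine Finset.sum_congr rfl fun i _ => ?_
    conv_rhs => rw [← hd.1 (N.frob (x2 i))]
    rw [Finset.smul_sum]
    refine Finset.sum_congr rfl fun j _ => ?_
    rw [mul_comm, mul_smul]
  · have hgen : ∀ j, β (gen e j) = x2 j := by
      intro j
      rw [hβ]
      have : ∀ i, (gen e j).1 i = e i j := by intro i; simp [gen]
      simp only [this, he]
      exact hd.1 _
    intro T _ _ u
    refine ⟨∑ j, (f j).smulRight (u (gen e j)), ?_, ?_⟩
    · intro m
      have h7 : ∀ j, f j (β m) = ι 0 (m.1 j) := by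
        intro j
        conv_rhs => rw [← mem_fix hrel m]
        rw [hβ]
        simp [Matrix.mulVec, dotProduct, he, mul_comm]
      simp only [LinearMap.sum_apply, LinearMap.smulRight_apply, h7]
      conv_rhs => rw [← sum_gen hrel m]
      rw [map_sum]
      simp only [map_smulₛₗ]
    · intro v hv
      ext1 y
      conv_lhs => rw [← hd.1 y]
      simp only [LinearMap.sum_apply, LinearMap.smulRight_apply, map_sum, map_smul]
      refine Finset.sum_congr rfl fun j _ => ?_
      rw [← hgen j, hv]

theorem b_iter {M : EtaleModuleOver R φ} {N : EtaleModuleOver S φS}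
    {b : M.carrier →ₛₗ[ι 0] N.carrier} (hb : ∀ m, b (M.frob m) = N.frob (b m)) (k : ℕ)
    (m : M.carrier) : b (M.frob^[k] m) = N.frob^[k] (b m) := by
  induction k with
  | zero => rfl
  | succ k ih => rw [Function.iterate_succ_apply', Function.iterate_succ_apply', hb, ih]

theorem b_surj
    (hsurj : ∀ s : S, ∃ k r, φS^[k] s = ι 0 r)
    (hφS : ∀ n, φS.comp (ι n) = (ι n).comp φ)
    {M : EtaleModuleOver R φ} {N : EtaleModuleOver S φS}
    {b : M.carrier →ₛₗ[ι 0] N.carrier} (hb : ∀ m, b (M.frob m) = N.frob (b m))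
    (hbc : IsBaseChangeAlong (ι 0) M.carrier N.carrier b) (y : N.carrier) :
    ∃ k m, N.frob^[k] y = b m := by
  let W : Submodule S N.carrier := Submodule.span S (Set.range b)
  have hq : W.mkQ = 0 := by
    refine (hbc (N.carrier ⧸ W) 0).unique ?_ (fun _ => rfl)
    intro m
    simpa using Submodule.subset_span (s := Set.range b) (R := S) ⟨m, rfl⟩
  have hy : y ∈ W := by
    rw [← Submodule.Quotient.mk_eq_zero, ← Submodule.mkQ_apply, hq]; rfl
  have hup : ∀ (y : N.carrier) k l m, N.frob^[k] y = b m →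
      N.frob^[l + k] y = b (M.frob^[l] m) := by
    intro y k l m h
    rw [Function.iterate_add_apply, h, b_iter hb]
  induction hy using Submodule.span_induction with
  | mem y h => obtain ⟨m, rfl⟩ := h; exact ⟨0, m, rfl⟩
  | zero => exact ⟨0, 0, by simp⟩
  | add y z _ _ h1 h2 =>
    obtain ⟨k, m, h1⟩ := h1
    obtain ⟨l, m', h2⟩ := h2
    refine ⟨l + k, M.frob^[l] m + M.frob^[k] m', ?_⟩
    rw [iterate_map_add, hup _ _ _ _ h1, add_comm l k, hup _ _ _ _ h2, map_add]
  | smul s y _ h1 =>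
    obtain ⟨k, m, h1⟩ := h1
    obtain ⟨l, r, h2⟩ := hsurj s
    refine ⟨l + k, φ^[k] r • M.frob^[l] m, ?_⟩
    rw [frob_iter_smul, hup _ _ _ _ h1, add_comm l k, Function.iterate_add_apply, h2,
      iota_iter hφS, map_smulₛₗ]

theorem b_ker
    (hker : ∀ r : R, ι 0 r = 0 → ∃ k, φ^[k] r = 0)
    {M : EtaleModuleOver R φ} {N : EtaleModuleOver S φS}
    {b : M.carrier →ₛₗ[ι 0] N.carrier}
    (hbc : IsBaseChangeAlong (ι 0) M.carrier N.carrier b) (m : M.carrier) (hm : b m = 0) :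
    ∃ k, M.frob^[k] m = 0 := by
  obtain ⟨n, x, f, g, hd⟩ := exists_data M
  obtain ⟨k, hk⟩ := uniform (P := fun i k => φ^[k] (f i m) = 0)
    (by intro i k h; rw [Function.iterate_succ_apply', h, map_zero])
    (by
      intro i
      apply hker
      let q : M.carrier →ₛₗ[ι 0] S :=
        { toFun := fun y => ι 0 (f i y)
          map_add' := by intros; simp
          map_smul' := by intros; simp }
      obtain ⟨v, hv, -⟩ := hbc S q
      have := hv m
      rw [hm, map_zero] at this
      exact this.symm)
  refine ⟨k, ?_⟩
  rw [← hd.1 m, frob_iter_sum]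
  simp [hk]

theorem b_ker_unif
    (hker : ∀ r : R, ι 0 r = 0 → ∃ k, φ^[k] r = 0)
    {M : EtaleModuleOver R φ} {N : EtaleModuleOver S φS}
    {b : M.carrier →ₛₗ[ι 0] N.carrier}
    (hbc : IsBaseChangeAlong (ι 0) M.carrier N.carrier b) {n : ℕ}
    (y z : Fin n → M.carrier) (h : ∀ i, b (y i) = b (z i)) :
    ∃ k, ∀ i, M.frob^[k] (y i) = M.frob^[k] (z i) := by
  refine uniform (P := fun i k => M.frob^[k] (y i) = M.frob^[k] (z i)) ?_ ?_
  · intro i k h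
    simp only [Function.iterate_succ_apply', h]
  · intro i
    obtain ⟨k, hk⟩ := b_ker hker hbc (y i - z i) (by rw [map_sub, h, sub_self])
    exact ⟨k, by rwa [iterate_map_sub, sub_eq_zero] at hk⟩

theorem fully_faithful
    (hker : ∀ r : R, ι 0 r = 0 → ∃ k, φ^[k] r = 0)
    (hsurj : ∀ s : S, ∃ k r, φS^[k] s = ι 0 r)
    (hφS : ∀ n, φS.comp (ι n) = (ι n).comp φ)
    (M₁ M₂ : EtaleModuleOver R φ) (N₁ N₂ : EtaleModuleOver S φS)
    (b₁ : M₁.carrier →ₛₗ[ι 0] N₁.carrier) (b₂ : M₂.carrier →ₛₗ[ι 0] N₂.carrier)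
    (hb₁ : ∀ m, b₁ (M₁.frob m) = N₁.frob (b₁ m))
    (hb₂ : ∀ m, b₂ (M₂.frob m) = N₂.frob (b₂ m))
    (hbc₂ : IsBaseChangeAlong (ι 0) M₂.carrier N₂.carrier b₂)
    (v : N₁.carrier →ₗ[S] N₂.carrier) (hv : ∀ x, v (N₁.frob x) = N₂.frob (v x)) :
        ∃! h : M₁.carrier →ₗ[R] M₂.carrier,
          (∀ m, h (M₁.frob m) = M₂.frob (h m)) ∧ (∀ m, v (b₁ m) = b₂ (h m)) := by
  have hviter : ∀ k y, v (N₁.frob^[k] y) = N₂.frob^[k] (v y) := by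
    intro k y
    induction k with
    | zero => rfl
    | succ k ih => rw [Function.iterate_succ_apply', Function.iterate_succ_apply', hv, ih]
  obtain ⟨n, x, f, g, hd⟩ := exists_data M₁
  refine existsUnique_of_exists_of_unique ?_ ?_
  · obtain ⟨k, hk⟩ := uniform (P := fun i k => ∃ m, N₂.frob^[k] (v (b₁ (x i))) = b₂ m)
      (by
        rintro i k ⟨m, h⟩
        exact ⟨M₂.frob m, by rw [Function.iterate_succ_apply', h, hb₂]⟩)
      (fun i => b_surj hsurj hφS hb₂ hbc₂ _)
    choose m hm using hk
    obtain ⟨f1, g1, hd1, hf1, hg1⟩ := hd.iter k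
    let h0 : M₁.carrier →ₗ[R] M₂.carrier := ∑ i, (f1 i).smulRight (m i)
    have h0a : ∀ y, h0 y = ∑ i, f1 i y • m i := by intro y; simp [h0]
    have hm' : ∀ i, b₂ (m i) = v (b₁ (M₁.frob^[k] (x i))) := by
      intro i; rw [← hm, b_iter hb₁, hviter]
    have h0b : ∀ y, v (b₁ y) = b₂ (h0 y) := by
      intro y
      conv_lhs => rw [← hd1.1 y]
      rw [h0a]
      simp [hm']
    obtain ⟨l, hl⟩ := b_ker_unif hker hbc₂ (fun i => h0 (M₁.frob (M₁.frob^[k] (x i))))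
      (fun i => M₂.frob (h0 (M₁.frob^[k] (x i)))) (by
        intro i
        rw [← h0b, hb₁, hv, h0b, hb₂])
    obtain ⟨f2, g2, hd2, hf2, hg2⟩ := hd1.iter l
    let h : M₁.carrier →ₗ[R] M₂.carrier :=
      ∑ i, (f2 i).smulRight (M₂.frob^[l] (h0 (M₁.frob^[k] (x i))))
    have ha : ∀ y, h y = ∑ i, f2 i y • (M₂.frob^[l] (h0 (M₁.frob^[k] (x i)))) := by
      intro y; simp [h]
    have hc : ∀ y, h (M₁.frob^[l] y) = M₂.frob^[l] (h0 y) := by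
      intro y
      conv_rhs => rw [← hd1.1 y]
      rw [ha]
      simp only [map_sum, map_smul, hf2, frob_iter_sum]
    refine ⟨h, ?_, ?_⟩
    · intro y
      rw [← hd2.1 y]
      simp only [map_sum, map_smulₛₗ, RingHom.id_apply]
      refine Finset.sum_congr rfl fun i _ => ?_
      congr 1
      rw [hc, ← Function.iterate_succ_apply' M₁.frob, Function.iterate_succ_apply, hc]
      refine (hl i).trans ?_
      rw [← Function.iterate_succ_apply, Function.iterate_succ_apply']
    · intro y
      conv_lhs => rw [← hd2.1 y]
      rw [ha]
      simp only [map_sum, map_smulₛₗ, RingHom.id_apply]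
      refine Finset.sum_congr rfl fun i _ => ?_
      congr 1
      rw [b_iter hb₁, hviter, h0b, b_iter hb₂]
  · rintro h h' ⟨hF, hB⟩ ⟨hF', hB'⟩
    obtain ⟨l, hl⟩ := b_ker_unif hker hbc₂ (fun i => h (x i)) (fun i => h' (x i)) (by
      intro i; rw [← hB, ← hB'])
    obtain ⟨f2, g2, hd2, hf2, hg2⟩ := hd.iter l
    have it : ∀ (h : M₁.carrier →ₗ[R] M₂.carrier), (∀ m, h (M₁.frob m) = M₂.frob (h m)) →
        ∀ l y, h (M₁.frob^[l] y) = M₂.frob^[l] (h y) := by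
      intro h hh l y
      induction l with
      | zero => rfl
      | succ k ih => rw [Function.iterate_succ_apply', Function.iterate_succ_apply', hh, ih]
    ext1 y
    rw [← hd2.1 y]
    simp only [map_sum, map_smul, it h hF, it h' hF', hl]

end main

end PhiAux

/-- Let `R` be a commutative ring with endomorphism `φ` and let `R_∞ = colim_φ R` be
the direct limit of `R →φ R →φ R →φ ⋯` (encoded by a cocone `ι n : R → S` with
`ι (n+1) ∘ φ = ι n` satisfying the universal property of the colimit), equipped with
its induced endomorphism `φS` (characterized by `φS ∘ ι n = ι n ∘ φ`).  Then base
change along the canonical map `ι 0 : R → R_∞` induces an equivalence from étale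
`φ`-modules over `R` to étale `φ`-modules over `R_∞`: it is essentially surjective
(every étale module over `R_∞` arises as a base change, compatibly with the étale
structures) and fully faithful (morphisms between base changes descend uniquely). -/
theorem etale_phi_modules_equivalence_over_perfection
    {R S : Type u} [CommRing R] [CommRing S]
    (φ : R →+* R) (φS : S →+* S)
    (ι : ℕ → (R →+* S))
    (hι : ∀ n, (ι (n + 1)).comp φ = ι n)
    (hUP : ∀ (T : Type u) [CommRing T] (u : ℕ → (R →+* T)),
      (∀ n, (u (n + 1)).comp φ = u n) → ∃! v : S →+* T, ∀ n, v.comp (ι n) = u n)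
    (hφS : ∀ n, φS.comp (ι n) = (ι n).comp φ) :
    (∀ N : EtaleModuleOver S φS,
      ∃ (M : EtaleModuleOver R φ) (b : M.carrier →ₛₗ[ι 0] N.carrier),
        (∀ m, b (M.frob m) = N.frob (b m)) ∧
          IsBaseChangeAlong (ι 0) M.carrier N.carrier b) ∧
    (∀ (M₁ M₂ : EtaleModuleOver R φ) (N₁ N₂ : EtaleModuleOver S φS)
      (b₁ : M₁.carrier →ₛₗ[ι 0] N₁.carrier) (b₂ : M₂.carrier →ₛₗ[ι 0] N₂.carrier),
      (∀ m, b₁ (M₁.frob m) = N₁.frob (b₁ m)) →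
      (∀ m, b₂ (M₂.frob m) = N₂.frob (b₂ m)) →
      IsBaseChangeAlong (ι 0) M₁.carrier N₁.carrier b₁ →
      IsBaseChangeAlong (ι 0) M₂.carrier N₂.carrier b₂ →
      ∀ v : N₁.carrier →ₗ[S] N₂.carrier, (∀ x, v (N₁.frob x) = N₂.frob (v x)) →
        ∃! h : M₁.carrier →ₗ[R] M₂.carrier,
          (∀ m, h (M₁.frob m) = M₂.frob (h m)) ∧ (∀ m, v (b₁ m) = b₂ (h m))) := by
  have hker := PhiAux.ker_iter hUP
  have hsurj := PhiAux.surj_iter hι hUP hφS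
  refine ⟨fun N => PhiAux.ess_surj hker hsurj hφS N, ?_⟩
  intro M₁ M₂ N₁ N₂ b₁ b₂ hb₁ hb₂ _ hbc₂ v hv
  exact PhiAux.fully_faithful hker hsurj hφS M₁ M₂ N₁ N₂ b₁ b₂ hb₁ hb₂ hbc₂ v hv
end

section
/- Let p be a prime and let R be a p-adically complete commutative ring equipped with a ring endomorphism φ. Then base change induces an equivalence from the category of étale φ-modules over R to the category of étale φ-modules over the p-adic completion of colim_φ R. -/
universe u

namespace PhiAux
open Matrix

/-- entrywise congruence of matrices modulo a natural number -/
def Cong {R : Type*} [CommRing R] {m n : Type*} (a : ℕ) (A B : Matrix m n R) : Prop :=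
  ∃ E : Matrix m n R, A = B + a • E

section Cong
variable {R S : Type*} [CommRing R] [CommRing S] {m n l : Type*} {a : ℕ}

lemma Cong.of_eq {A B : Matrix m n R} (h : A = B) : Cong a A B := ⟨0, by simp [h]⟩
lemma Cong.refl (A : Matrix m n R) : Cong a A A := .of_eq rfl
lemma Cong.symm {A B : Matrix m n R} (h : Cong a A B) : Cong a B A := by
  obtain ⟨E, rfl⟩ := h; exact ⟨-E, by simp⟩
lemma Cong.trans {A B C : Matrix m n R} (h : Cong a A B) (h' : Cong a B C) : Cong a A C := by
  obtain ⟨E, rfl⟩ := h; obtain ⟨F, rfl⟩ := h'; exact ⟨F + E, by rw [smul_add]; abel⟩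
lemma Cong.add {A B C D : Matrix m n R} (h : Cong a A B) (h' : Cong a C D) :
    Cong a (A + C) (B + D) := by
  obtain ⟨E, rfl⟩ := h; obtain ⟨F, rfl⟩ := h'; exact ⟨E + F, by rw [smul_add]; abel⟩
lemma Cong.sub {A B C D : Matrix m n R} (h : Cong a A B) (h' : Cong a C D) :
    Cong a (A - C) (B - D) := by
  obtain ⟨E, rfl⟩ := h; obtain ⟨F, rfl⟩ := h'; exact ⟨E - F, by rw [smul_sub]; abel⟩
lemma Cong.mul_left [Fintype m] {A B : Matrix m n R} (h : Cong a A B) (C : Matrix l m R) :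
    Cong a (C * A) (C * B) := by
  obtain ⟨E, rfl⟩ := h; exact ⟨C * E, by rw [Matrix.mul_add, Matrix.mul_smul]⟩
lemma Cong.mul_right [Fintype n] {A B : Matrix m n R} (h : Cong a A B) (C : Matrix n l R) :
    Cong a (A * C) (B * C) := by
  obtain ⟨E, rfl⟩ := h; exact ⟨E * C, by rw [Matrix.add_mul, Matrix.smul_mul]⟩
lemma Cong.map {A B : Matrix m n R} (h : Cong a A B) (f : R →+* S) :
    Cong a (A.map f) (B.map f) := by
  obtain ⟨E, rfl⟩ := h; exact ⟨E.map f, by ext; simp⟩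
lemma Cong.dvd {A B : Matrix m n R} {b : ℕ} (h : Cong a A B) (hb : b ∣ a) : Cong b A B := by
  obtain ⟨E, rfl⟩ := h; obtain ⟨c, rfl⟩ := hb; exact ⟨c • E, by rw [smul_smul]⟩

lemma cong_iff {A B : Matrix m n R} : Cong a A B ↔ ∀ i j, (a : R) ∣ A i j - B i j := by
  constructor
  · rintro ⟨E, rfl⟩ i j
    exact ⟨E i j, by simp⟩
  · intro h
    choose E hE using h
    refine ⟨Matrix.of E, ?_⟩
    ext i j
    have := hE i j
    simp only [Matrix.add_apply, Matrix.smul_apply, Matrix.of_apply, nsmul_eq_mul]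
    rw [← this]; ring
end Cong

section Complete
variable {R : Type*} [CommRing R] {p : ℕ} {m n : Type*}

lemma mat_haus (h : IsAdicComplete (Ideal.span {(p : R)}) R) {A B : Matrix m n R}
    (hA : ∀ N, Cong (p ^ N) A B) : A = B := by
  ext i j
  rw [← sub_eq_zero]
  refine h.toIsHausdorff.haus' _ fun N => ?_
  rw [SModEq.zero, smul_eq_mul, Ideal.mul_top, Ideal.span_singleton_pow,
    Ideal.mem_span_singleton]
  simpa using cong_iff.1 (hA N) i j

lemma mat_lim (h : IsAdicComplete (Ideal.span {(p : R)}) R) (A : ℕ → Matrix m n R)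
    (hA : ∀ N, Cong (p ^ N) (A (N + 1)) (A N)) : ∃ L, ∀ N, Cong (p ^ N) L (A N) := by
  have key : ∀ i j, ∃ L : R, ∀ N, (p : R) ^ N ∣ L - A N i j := by
    intro i j
    obtain ⟨L, hL⟩ := h.toIsPrecomplete.prec' (fun N => A N i j) (by
      intro a b hab
      induction b, hab using Nat.le_induction with
      | base => rfl
      | succ b hab ih =>
        refine ih.trans ?_
        rw [SModEq.sub_mem, smul_eq_mul, Ideal.mul_top, Ideal.span_singleton_pow,
          Ideal.mem_span_singleton]
        have := cong_iff.1 (hA b).symm i j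
        rw [Nat.cast_pow] at this
        exact (pow_dvd_pow _ hab).trans this)
    refine ⟨L, fun N => ?_⟩
    have := (hL N).symm
    rwa [SModEq.sub_mem, smul_eq_mul, Ideal.mul_top, Ideal.span_singleton_pow,
          Ideal.mem_span_singleton] at this
  choose L hL using key
  refine ⟨Matrix.of L, fun N => cong_iff.2 fun i j => ?_⟩
  simpa using hL i j N

lemma isUnit_of_cong [Fintype m] [DecidableEq m]
    (h : IsAdicComplete (Ideal.span {(p : R)}) R) {A B : Matrix m m R} (hA : IsUnit A)
    (hAB : Cong p B A) : IsUnit B := by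
  obtain ⟨U, rfl⟩ := hA
  obtain ⟨E, rfl⟩ := hAB
  have hj := IsAdicComplete.le_jacobson_bot (Ideal.span {(p : R)})
  have hp : (p : R) ∈ Ideal.jacobson ⊥ := hj (Ideal.mem_span_singleton_self _)
  have e1 : (U : Matrix m m R) + p • E = U * (1 + p • ((U⁻¹ : (Matrix m m R)ˣ) * E)) := by
    rw [mul_add, mul_one, mul_smul_comm, Units.mul_inv_cancel_left]
  rw [e1]
  refine U.isUnit.mul ?_
  rw [Matrix.isUnit_iff_isUnit_det]
  set F := ((U⁻¹ : (Matrix m m R)ˣ) : Matrix m m R) * E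
  have : (p : R) ∣ (1 + p • F).det - 1 := by
    have hq : (Ideal.Quotient.mk (Ideal.span {(p:R)})) ((1 + p • F).det) = 1 := by
      rw [RingHom.map_det]
      have : (Ideal.Quotient.mk (Ideal.span {(p:R)})).mapMatrix (1 + p • F) = 1 := by
        rw [map_add, map_one, map_nsmul, add_eq_left]
        have hp0 : ((p : ℕ) : R ⧸ Ideal.span {(p:R)}) = 0 := by
          rw [← map_natCast (Ideal.Quotient.mk (Ideal.span {(p:R)})), Ideal.Quotient.eq_zero_iff_mem]
          exact Ideal.mem_span_singleton_self _
        ext i j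
        simp [hp0]
      rw [this, det_one]
    rw [← Ideal.mem_span_singleton, ← Ideal.Quotient.eq_zero_iff_mem, map_sub, hq, map_one, sub_self]
  obtain ⟨d, hd⟩ := this
  have := Ideal.mem_jacobson_bot.1 hp d
  rwa [← hd, sub_add_cancel] at this

lemma isUnit_of_mul_cong [Fintype m] [DecidableEq m]
    (h : IsAdicComplete (Ideal.span {(p : R)}) R) {A B : Matrix m m R}
    (hAB : Cong p (A * B) 1) : IsUnit A := by
  have := isUnit_of_cong h isUnit_one hAB
  rw [Matrix.isUnit_iff_isUnit_det, det_mul] at this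
  rw [Matrix.isUnit_iff_isUnit_det]
  exact isUnit_of_mul_isUnit_left this
end Complete

/-- iterates of an endomorphism -/
def pw {R : Type*} [CommRing R] (φ : R →+* R) : ℕ → (R →+* R)
  | 0 => RingHom.id R
  | k + 1 => (pw φ k).comp φ

section pw
variable {R : Type*} [CommRing R] (φ : R →+* R)
@[simp] lemma pw_zero (r : R) : pw φ 0 r = r := rfl
lemma pw_succ (k : ℕ) (r : R) : pw φ (k + 1) r = pw φ k (φ r) := rfl
lemma pw_add (k j : ℕ) (r : R) : pw φ (k + j) r = pw φ k (pw φ j r) := by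
  induction j generalizing r with
  | zero => simp
  | succ j ih => rw [← add_assoc, pw_succ, ih, pw_succ]
lemma pw_succ' (k : ℕ) (r : R) : pw φ (k + 1) r = φ (pw φ k r) := by
  rw [add_comm, pw_add]; rfl
end pw

/-- The tower of maps `u k : R → S`. -/
structure Tower {R S : Type*} [CommRing R] [CommRing S] (p : ℕ) (φ : R →+* R) (ψ : S →+* S)
    (u : ℕ → (R →+* S)) : Prop where
  hu : ∀ k r, u (k + 1) (φ r) = u k r
  hφ : ∀ k r, ψ (u k r) = u k (φ r)
  surj : ∀ (N : ℕ) (s : S), ∃ k r, (p : S) ^ N ∣ s - u k r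
  inj : ∀ (N k : ℕ) (r : R), (p : S) ^ N ∣ u k r → ∃ j, (p : R) ^ N ∣ (pw φ j) r

section T
variable {R S : Type*} [CommRing R] [CommRing S] {p : ℕ} {φ : R →+* R} {ψ : S →+* S}
    {u : ℕ → (R →+* S)} {m n : Type*}

lemma Tower.hu' (T : Tower p φ ψ u) (k j r) : u (k + j) ((pw φ j) r) = u k r := by
  induction j generalizing r with
  | zero => simp
  | succ j ih =>
    rw [pw_succ', ← add_assoc, T.hu, ih]

lemma Tower.hu0 (T : Tower p φ ψ u) (k r) : u k ((pw φ k) r) = u 0 r := by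
  simpa using T.hu' 0 k r

lemma Tower.mhu' (T : Tower p φ ψ u) (k j) (A : Matrix m n R) :
    (A.map (pw φ j)).map (u (k + j)) = A.map (u k) := by
  ext; simp [T.hu']

lemma Tower.mhu0 (T : Tower p φ ψ u) (k) (A : Matrix m n R) :
    (A.map (pw φ k)).map (u k) = A.map (u 0) := by
  ext; simp [T.hu0]

lemma Tower.mhφ (T : Tower p φ ψ u) (k) (A : Matrix m n R) :
    (A.map (u k)).map ψ = (A.map φ).map (u k) := by
  ext; simp [T.hφ]

lemma Tower.msurj [Fintype m] [Fintype n] (T : Tower p φ ψ u) (N : ℕ) (A : Matrix m n S) :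
    ∃ k0, ∀ k ≥ k0, ∃ B : Matrix m n R, Cong (p ^ N) A (B.map (u k)) := by
  choose k r h using fun i j => T.surj N (A i j)
  refine ⟨Finset.univ.sup fun i => Finset.univ.sup fun j => k i j, fun K hK => ?_⟩
  have hle : ∀ i j, k i j ≤ K := fun i j =>
    le_trans ((Finset.le_sup (f := fun j => k i j) (Finset.mem_univ j)).trans
      (Finset.le_sup (f := fun i => Finset.univ.sup fun j => k i j) (Finset.mem_univ i))) hK
  refine ⟨Matrix.of fun i j => (pw φ (K - k i j)) (r i j), cong_iff.2 fun i j => ?_⟩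
  have := T.hu' (k i j) (K - k i j) (r i j)
  rw [Nat.add_sub_cancel' (hle i j)] at this
  simpa [this] using h i j

lemma Tower.minj [Fintype m] [Fintype n] (T : Tower p φ ψ u) (N k : ℕ) (A B : Matrix m n R)
    (h : Cong (p ^ N) (A.map (u k)) (B.map (u k))) :
    ∃ j, Cong (p ^ N) (A.map (pw φ j)) (B.map (pw φ j)) := by
  have : ∀ a b, ∃ j, (p : R) ^ N ∣ (pw φ j) (A a b - B a b) := fun a b =>
    T.inj N k _ (by simpa using cong_iff.1 h a b)
  choose J hJ using this
  refine ⟨Finset.univ.sup fun i => Finset.univ.sup fun j => J i j, cong_iff.2 fun i j => ?_⟩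
  set K := Finset.univ.sup fun i => Finset.univ.sup fun j => J i j
  have hle : J i j ≤ K := 
    ((Finset.le_sup (f := fun j => J i j) (Finset.mem_univ j)).trans
      (Finset.le_sup (f := fun i => Finset.univ.sup fun j => J i j) (Finset.mem_univ i)))
  have h2 := map_dvd (pw φ (K - J i j)) (hJ i j)
  rw [← pw_add, Nat.sub_add_cancel hle] at h2
  simpa using h2

lemma map_pow_succ (A : Matrix m n R) (k : ℕ) : (A.map φ).map (pw φ k) = A.map (pw φ (k + 1)) := by
  ext; simp [pw_succ]

lemma map_pw_add (A : Matrix m n R) (k j : ℕ) :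
    A.map (pw φ (k + j)) = (A.map (pw φ k)).map (pw φ j) := by
  ext; simp [← pw_add, add_comm]

lemma map_pow_succ' (A : Matrix m n R) (k : ℕ) : (A.map (pw φ k)).map φ = A.map (pw φ (k + 1)) := by
  ext; simp [pw_succ']

variable [Fintype m] [Fintype n]

lemma ff_exists_aux (a : ℕ) (k : ℕ) : ∀ (P : Matrix m m R) (Q : Matrix n n R) (y : Matrix m n R),
    Cong a (P.map (pw φ k) * y.map φ * Q.map (pw φ k)) y →
    ∃ z, Cong a (P * z.map φ * Q) z ∧ Cong a (z.map (pw φ k)) y := by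
  induction k with
  | zero =>
    intro P Q y h
    refine ⟨y, ?_, .of_eq (by ext; simp)⟩
    convert h <;> ext <;> simp
  | succ k ih =>
    intro P Q y h
    obtain ⟨z, h1, h2⟩ := ih (P.map φ) (Q.map φ) y (by simpa only [map_pow_succ] using h)
    refine ⟨P * z * Q, ?_, ?_⟩
    · simp only [Matrix.map_mul]
      exact (h1.mul_left P).mul_right Q
    · rw [← map_pow_succ]
      simp only [Matrix.map_mul]
      have := h1.map (pw φ k)
      simp only [Matrix.map_mul] at this
      exact this.trans h2

lemma ff_unique_aux (a : ℕ) (k : ℕ) : ∀ (P : Matrix m m R) (Q : Matrix n n R) (y z : Matrix m n R),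
    Cong a (P * y.map φ * Q) y → Cong a (P * z.map φ * Q) z →
    Cong a (y.map (pw φ k)) (z.map (pw φ k)) → Cong a y z := by
  induction k with
  | zero =>
    intro P Q y z _ _ h
    convert h <;> ext <;> simp
  | succ k ih =>
    intro P Q y z h1 h2 h
    rw [← map_pow_succ, ← map_pow_succ] at h
    have h1' := h1.map φ
    have h2' := h2.map φ
    simp only [Matrix.map_mul] at h1' h2'
    have := ih _ _ _ _ h1' h2' h
    exact h1.symm.trans (((this.mul_left P).mul_right Q).trans h2)

lemma Tower.ff_unique_cong (T : Tower p φ ψ u) (N : ℕ) (P : Matrix m m R) (Q : Matrix n n R)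
    (y z : Matrix m n R)
    (hy : Cong (p ^ N) (P * y.map φ * Q) y) (hz : Cong (p ^ N) (P * z.map φ * Q) z)
    (h : Cong (p ^ N) (y.map (u 0)) (z.map (u 0))) : Cong (p ^ N) y z := by
  obtain ⟨j, hj⟩ := T.minj N 0 y z h
  exact ff_unique_aux _ j P Q y z hy hz hj

lemma Tower.ff_exists_cong (T : Tower p φ ψ u) (N : ℕ) (P : Matrix m m R) (Q : Matrix n n R)
    (H : Matrix m n S) (hH : P.map (u 0) * H.map ψ * Q.map (u 0) = H) :
    ∃ z, Cong (p ^ N) (P * z.map φ * Q) z ∧ Cong (p ^ N) (z.map (u 0)) H := by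
  obtain ⟨k, hk⟩ := T.msurj N H
  obtain ⟨y, hy⟩ := hk k le_rfl
  have h1 : Cong (p ^ N) ((P.map (pw φ k) * y.map φ * Q.map (pw φ k)).map (u k)) (y.map (u k)) := by
    refine Cong.trans ?_ hy
    conv_rhs => rw [← hH]
    simp only [Matrix.map_mul, T.mhu0]
    refine Cong.mul_right (Cong.mul_left ?_ _) _
    rw [← T.mhφ]
    exact (hy.map ψ).symm
  obtain ⟨j, hj⟩ := T.minj N k _ _ h1
  simp only [Matrix.map_mul] at hj
  obtain ⟨z, hz, hz'⟩ := ff_exists_aux (φ := φ) (p ^ N) (k + j) P Q (y.map (pw φ j)) (by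
    rw [map_pw_add, map_pw_add]
    have e2 : (y.map (pw φ j)).map φ = (y.map φ).map (pw φ j) := by
      ext; simp [← pw_succ, ← pw_succ']
    rw [e2]
    exact hj)
  refine ⟨z, hz, ?_⟩
  have := hz'.map (u (k + j))
  rw [T.mhu0, T.mhu'] at this
  exact this.trans hy.symm

lemma Tower.ff_unique (T : Tower p φ ψ u) (hR : IsAdicComplete (Ideal.span {(p : R)}) R)
    (P : Matrix m m R) (Q : Matrix n n R) (y z : Matrix m n R)
    (hy : P * y.map φ * Q = y) (hz : P * z.map φ * Q = z)
    (h : y.map (u 0) = z.map (u 0)) : y = z :=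
  mat_haus hR fun N => T.ff_unique_cong N P Q y z (.of_eq hy) (.of_eq hz) (.of_eq h)

lemma Tower.ff_exists (T : Tower p φ ψ u) (hR : IsAdicComplete (Ideal.span {(p : R)}) R)
    (hS : IsAdicComplete (Ideal.span {(p : S)}) S)
    (P : Matrix m m R) (Q : Matrix n n R)
    (H : Matrix m n S) (hH : P.map (u 0) * H.map ψ * Q.map (u 0) = H) :
    ∃ z : Matrix m n R, P * z.map φ * Q = z ∧ z.map (u 0) = H := by
  choose z h1 h2 using fun N => T.ff_exists_cong N P Q H hH
  obtain ⟨L, hL⟩ := mat_lim hR z fun N => T.ff_unique_cong N P Q _ _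
    ((h1 (N + 1)).dvd (pow_dvd_pow _ (Nat.le_succ N))) (h1 N)
    (((h2 (N + 1)).dvd (pow_dvd_pow _ (Nat.le_succ N))).trans (h2 N).symm)
  refine ⟨L, mat_haus hR fun N => ?_, mat_haus hS fun N => ?_⟩
  · exact ((((hL N).map φ).mul_left P).mul_right Q).trans ((h1 N).trans (hL N).symm)
  · exact ((hL N).map (u 0)).trans (h2 N)

/-! descent of invertible matrices -/

lemma Tower.as_aux (T : Tower p φ ψ u) (P : Matrix m m R) (Q : Matrix n n R) (k : ℕ) :
    ∀ (E : Matrix m n S) (r : Matrix m n R), Cong p E (r.map (u k)) →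
    ∃ (D : Matrix m n S) (W : Matrix m n R),
      Cong p (E + D - P.map (u 0) * D.map ψ * Q.map (u 0)) (W.map (u 0)) := by
  induction k with
  | zero =>
    intro E r h
    exact ⟨0, r, by simpa using h⟩
  | succ k ih =>
    intro E r h
    obtain ⟨D, W, hD⟩ := ih (P.map (u 0) * E.map ψ * Q.map (u 0))
      (P.map (pw φ k) * r * Q.map (pw φ k)) (by
        simp only [Matrix.map_mul, T.mhu0]
        refine Cong.mul_right (Cong.mul_left ?_ _) _
        refine (h.map ψ).trans (.of_eq ?_)
        rw [T.mhφ]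
        ext; simp [T.hu])
    refine ⟨D - E, W, ?_⟩
    convert hD using 1
    have : (D - E).map ψ = D.map ψ - E.map ψ := by ext; simp
    rw [this, Matrix.mul_sub, Matrix.sub_mul]
    abel

lemma Tower.as (T : Tower p φ ψ u) (P : Matrix m m R) (Q : Matrix n n R) (E : Matrix m n S) :
    ∃ (D : Matrix m n S) (W : Matrix m n R),
      Cong p (E + D - P.map (u 0) * D.map ψ * Q.map (u 0)) (W.map (u 0)) := by
  obtain ⟨k, hk⟩ := T.msurj 1 E
  obtain ⟨y, hy⟩ := hk k le_rfl
  exact T.as_aux P Q k E y (by simpa using hy)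
end T

section D
variable {R S : Type*} [CommRing R] [CommRing S] {p : ℕ} {φ : R →+* R} {ψ : S →+* S}
    {u : ℕ → (R →+* S)} {m : Type*} [Fintype m] [DecidableEq m]

lemma isUnit_map {A : Matrix m m R} (h : IsUnit A) (f : R →+* S) : IsUnit (A.map f) :=
  h.map f.mapMatrix

lemma conj_pow (X : Matrix m m S) (hX : IsUnit X) (k : ℕ) :
    ∃ C, IsUnit C ∧ C * X = X.map (pw ψ k) * C.map ψ := by
  induction k with
  | zero => exact ⟨1, isUnit_one, by ext; simp⟩
  | succ k ih =>
    obtain ⟨C, hC, h⟩ := ih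
    obtain ⟨V, hV⟩ := isUnit_map hX (pw ψ k)
    refine ⟨(V⁻¹ : (Matrix m m S)ˣ) * C, V⁻¹.isUnit.mul hC, ?_⟩
    rw [mul_assoc, h, ← map_pow_succ', ← hV, Units.inv_mul_cancel_left, Matrix.map_mul,
      ← mul_assoc, ← Matrix.map_mul]
    simp

lemma Tower.step0 (T : Tower p φ ψ u) (hR : IsAdicComplete (Ideal.span {(p : R)}) R)
    (X : Matrix m m S) (hX : IsUnit X) :
    ∃ (C : Matrix m m S) (Z : Matrix m m R), IsUnit C ∧ IsUnit Z ∧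
      Cong p (C * X) (Z.map (u 0) * C.map ψ) := by
  obtain ⟨V, rfl⟩ := hX
  obtain ⟨k1, hk1⟩ := T.msurj 1 (V : Matrix m m S)
  obtain ⟨k2, hk2⟩ := T.msurj 1 ((V⁻¹ : (Matrix m m S)ˣ) : Matrix m m S)
  obtain ⟨A, hA⟩ := hk1 (max k1 k2) (le_max_left _ _)
  obtain ⟨B, hB⟩ := hk2 (max k1 k2) (le_max_right _ _)
  set k := max k1 k2
  obtain ⟨j, hj⟩ := T.minj 1 k (A * B) 1 (by
    have h1 := (hA.symm.mul_right (B.map (u k))).trans (hB.symm.mul_left _)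
    rw [Matrix.map_mul]
    refine h1.trans (.of_eq ?_)
    simp)
  rw [pow_one] at hj hA
  have hU : IsUnit (A.map (pw φ j)) := isUnit_of_mul_cong hR (B := B.map (pw φ j)) (by
    rw [← Matrix.map_mul]; refine hj.trans (.of_eq (by simp)))
  obtain ⟨C, hC, h⟩ := conj_pow (ψ := ψ) (V : Matrix m m S) V.isUnit (k + j)
  refine ⟨C, A.map (pw φ j), hC, hU, ?_⟩
  rw [h]
  refine Cong.mul_right ?_ _
  refine (hA.map _).trans (.of_eq ?_)
  rw [← T.mhu' k j]
  generalize A.map (pw φ j) = A'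
  generalize k + j = l
  rw [← T.mhu0 l]
  have : ∀ i, (A'.map (u l)).map (pw ψ i) = (A'.map (pw φ i)).map (u l) := by
    intro i
    induction i with
    | zero => ext; simp
    | succ i ih => rw [← map_pow_succ', ih, T.mhφ, map_pow_succ']
  exact this l

lemma Tower.step (T : Tower p φ ψ u) (hR : IsAdicComplete (Ideal.span {(p : R)}) R)
    (hS : IsAdicComplete (Ideal.span {(p : S)}) S)
    (X : Matrix m m S) (N : ℕ) (C : Matrix m m S) (Z : Matrix m m R)
    (hC : IsUnit C) (hZ : IsUnit Z)
    (h : Cong (p ^ (N + 1)) (C * X) (Z.map (u 0) * C.map ψ)) :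
    ∃ (C' : Matrix m m S) (Z' : Matrix m m R), IsUnit C' ∧ IsUnit Z' ∧
      Cong (p ^ (N + 2)) (C' * X) (Z'.map (u 0) * C'.map ψ) ∧
      Cong (p ^ (N + 1)) C' C ∧ Cong (p ^ (N + 1)) Z' Z := by
  have h' := h
  obtain ⟨E, hE⟩ := h
  obtain ⟨U, rfl⟩ := hZ
  obtain ⟨V, hV⟩ := isUnit_map hC ψ
  have hinv : (U : Matrix m m R).map (u 0) * ((U⁻¹ : (Matrix m m R)ˣ) : Matrix m m R).map (u 0)
      = 1 := by rw [← Matrix.map_mul]; simp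
  have hinv' : ((U⁻¹ : (Matrix m m R)ˣ) : Matrix m m R).map (u 0) * (U : Matrix m m R).map (u 0) 
      = 1 := by rw [← Matrix.map_mul]; simp
  set UI : Matrix m m R := ((U⁻¹ : (Matrix m m R)ˣ) : Matrix m m R)
  obtain ⟨D, W, hD⟩ := T.as (U : Matrix m m R) UI (E * (V⁻¹ : (Matrix m m S)ˣ) * UI.map (u 0))
  set G := (U : Matrix m m R).map (u 0)
  set GI := UI.map (u 0)
  have hpd : p ∣ p ^ (N + 1) := dvd_pow_self _ (Nat.succ_ne_zero N)
  have c1 : Cong (p ^ (N + 1)) (C + p ^ (N + 1) • (D * C)) C := ⟨_, rfl⟩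
  have c2 : Cong (p ^ (N + 1)) ((U : Matrix m m R) + p ^ (N + 1) • (W * (U : Matrix m m R))) U := ⟨_, rfl⟩
  refine ⟨C + p ^ (N + 1) • (D * C), U + p ^ (N + 1) • (W * (U : Matrix m m R)),
    isUnit_of_cong hS hC (c1.dvd hpd), isUnit_of_cong hR U.isUnit (c2.dvd hpd), ?_, c1, c2⟩
  have hm1 : ∀ (F F' : Matrix m m S) (a : ℕ), (F + a • F').map ψ = F.map ψ + a • F'.map ψ := by
    intros; ext
    simp only [Matrix.map_apply, Matrix.add_apply, Matrix.smul_apply, map_add, map_nsmul]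
  have hm2 : ∀ (F F' : Matrix m m R) (a : ℕ), (F + a • F').map (u 0) =
      F.map (u 0) + a • F'.map (u 0) := by
    intros; ext
    simp only [Matrix.map_apply, Matrix.add_apply, Matrix.smul_apply, map_add, map_nsmul]
  -- the basic congruence
  have d1 := (hD.mul_right G).mul_right (C.map ψ)
  have e1 : (E * (V⁻¹ : (Matrix m m S)ˣ) * GI + D - G * D.map ψ * GI) * G * C.map ψ
      = E + D * G * C.map ψ - G * D.map ψ * C.map ψ := by
    rw [← hV]
    simp only [add_mul, sub_mul, mul_assoc]
    simp only [← mul_assoc GI G, hinv', one_mul]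
    simp
  rw [e1] at d1
  have d2 : Cong p (E + D * (C * X) - G * D.map ψ * C.map ψ) (W.map (u 0) * G * C.map ψ) := by
    refine Cong.trans ?_ d1
    refine Cong.sub (Cong.add (.refl _) ?_) (.refl _)
    rw [mul_assoc]
    exact (h'.dvd hpd).mul_left D
  obtain ⟨K, hK⟩ := d2
  obtain ⟨q, hq⟩ : ∃ q, p ^ (N + 1) = p * q := hpd
  refine ⟨K - q • (W.map (u 0) * G * (D.map ψ * C.map ψ)), ?_⟩
  rw [hm1, hm2, Matrix.map_mul, Matrix.map_mul, pow_succ p (N + 1)]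
  have hK' : D * (C * X) = W.map (u 0) * G * C.map ψ + p • K - E + G * D.map ψ * C.map ψ := by
    rw [← hK]; abel
  have : (C + p ^ (N + 1) • (D * C)) * X = C * X + p ^ (N + 1) • (D * (C * X)) := by
    rw [add_mul, smul_mul_assoc, mul_assoc]
  rw [this, hK', hE]
  simp only [add_mul, mul_add, smul_mul_assoc, mul_smul_comm, smul_add, smul_sub, mul_smul,
    mul_assoc]
  have : ∀ F : Matrix m m S, p ^ (N + 1) • p ^ (N + 1) • F = p ^ (N + 1) • p • q • F := by
    intro F; rw [← mul_smul p q F, ← hq]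
  rw [this]
  abel

lemma Tower.descend (T : Tower p φ ψ u) (hR : IsAdicComplete (Ideal.span {(p : R)}) R)
    (hS : IsAdicComplete (Ideal.span {(p : S)}) S) (X : Matrix m m S) (hX : IsUnit X) :
    ∃ (C : Matrix m m S) (Z : Matrix m m R), IsUnit C ∧ IsUnit Z ∧
      C * X = Z.map (u 0) * C.map ψ := by
  let St := fun N : ℕ => {q : Matrix m m S × Matrix m m R // IsUnit q.1 ∧ IsUnit q.2 ∧
    Cong (p ^ (N + 1)) (q.1 * X) (q.2.map (u 0) * q.1.map ψ)}
  have s0 : Nonempty (St 0) := by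
    obtain ⟨C, Z, h1, h2, h3⟩ := T.step0 hR X hX
    exact ⟨⟨(C, Z), h1, h2, by simpa using h3⟩⟩
  have st : ∀ N (q : St N), ∃ q' : St (N + 1), Cong (p ^ (N + 1)) q'.1.1 q.1.1 ∧
      Cong (p ^ (N + 1)) q'.1.2 q.1.2 := by
    rintro N ⟨⟨C, Z⟩, h1, h2, h3⟩
    obtain ⟨C', Z', a, b, c, d, e⟩ := T.step hR hS X N C Z h1 h2 h3
    exact ⟨⟨(C', Z'), a, b, c⟩, d, e⟩
  choose nx hnx1 hnx2 using st
  let seq : (N : ℕ) → St N := fun N => Nat.rec s0.some (fun k q => nx k q) N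
  have hpd : ∀ N, p ^ N ∣ p ^ (N + 1) := fun N => pow_dvd_pow _ (Nat.le_succ N)
  obtain ⟨C, hC⟩ := mat_lim hS (fun N => (seq N).1.1) fun N => (hnx1 N (seq N)).dvd (hpd N)
  obtain ⟨Z, hZ⟩ := mat_lim hR (fun N => (seq N).1.2) fun N => (hnx2 N (seq N)).dvd (hpd N)
  refine ⟨C, Z, isUnit_of_cong hS (seq 1).2.1 (by simpa using hC 1),
    isUnit_of_cong hR (seq 1).2.2.1 (by simpa using hZ 1), mat_haus hS fun N => ?_⟩
  refine ((hC N).mul_right X).trans (((seq N).2.2.2.dvd (hpd N)).trans ?_)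
  exact (((hZ N).symm.map (u 0)).mul_right _).trans (((hC N).symm.map ψ).mul_left _)
end D
end PhiAux

namespace PhiAux
open Matrix

/-- apply a ring hom to a vector -/
def vm {R S : Type*} [CommRing R] [CommRing S] {ι : Type*} (f : R →+* S) (x : ι → R) : ι → S :=
  fun i => f (x i)

section
variable {R S : Type*} [CommRing R] [CommRing S] {ι κ : Type*} [Fintype ι] [DecidableEq ι]

lemma vm_single (σ : R →+* S) (i : ι) : vm σ (Pi.single i 1) = Pi.single i 1 := by
  ext j; by_cases h : j = i
  · subst h; simp [vm]
  · simp [vm, h]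

lemma vm_mulVec (σ : R →+* S) (A : Matrix κ ι R) (x : ι → R) :
    vm σ (A *ᵥ x) = A.map σ *ᵥ vm σ x := by
  ext; simp [vm, mulVec, dotProduct, map_sum]

lemma semi_lc {M T : Type*} [AddCommGroup M] [AddCommGroup T] [Module R M] [Module S T]
    {σ : R →+* S} (g : M →ₛₗ[σ] T) (f : (ι → R) →ₗ[R] M) (x : ι → R) :
    Fintype.linearCombination S (fun i => g (f (Pi.single i 1))) (vm σ x) = g (f x) := by
  conv_rhs => rw [LinearMap.pi_apply_eq_sum_univ f x]
  simp only [Fintype.linearCombination_apply, map_sum, map_smulₛₗ, vm]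
  refine Finset.sum_congr rfl fun i _ => ?_
  congr 3
  ext j; simp [Pi.single_apply, eq_comm]

lemma ext_vm {T : Type*} [AddCommGroup T] [Module S T] (σ : R →+* S)
    {f g : (ι → S) →ₗ[S] T} (h : ∀ x, f (vm σ x) = g (vm σ x)) : f = g := by
  refine LinearMap.pi_ext' fun i => LinearMap.ext_ring ?_
  have := h (Pi.single i 1)
  rw [vm_single] at this
  simpa using this

lemma mat_ext_vm (σ : R →+* S) {A B : Matrix κ ι S} (h : ∀ x, A *ᵥ (vm σ x) = B *ᵥ (vm σ x)) :
    A = B := by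
  have := ext_vm (f := Matrix.mulVecLin A) (g := Matrix.mulVecLin B) σ (by simpa using h)
  exact Matrix.toLin'.injective (by simpa [Matrix.toLin'_apply'] using this)

lemma mat_ext {A B : Matrix κ ι S} (h : ∀ x, A *ᵥ x = B *ᵥ x) : A = B :=
  mat_ext_vm (RingHom.id S) fun x => h _
end

section
variable {R : Type u} [CommRing R] {φ : R →+* R}

lemma exists_pres (M : EtaleModuleOver R φ) : ∃ (n : ℕ) (f : (Fin n → R) →ₗ[R] M.carrier)
    (s : M.carrier →ₗ[R] (Fin n → R)) (X Y e : Matrix (Fin n) (Fin n) R),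
    (∀ m, f (s m) = m) ∧ (∀ x, s (f x) = e *ᵥ x) ∧ (∀ x, M.frob (f x) = f (X *ᵥ vm φ x)) ∧
    X * Y = e ∧ Y * X = e.map φ ∧ e * X = X ∧ Y * e = Y := by
  have := M.finite
  have := M.projective
  obtain ⟨n, f, hf⟩ := Module.Finite.exists_fin' R M.carrier
  obtain ⟨s, hs⟩ := Module.projective_lifting_property f LinearMap.id hf
  have hs' : ∀ m, f (s m) = m := fun m => LinearMap.congr_fun hs m
  let g : M.carrier →ₛₗ[φ] (Fin n → R) :=
    { toFun := fun m => vm φ (s m)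
      map_add' := by intros; ext; simp [vm]
      map_smul' := by intros; ext; simp [vm] }
  have hg : ∀ m, g m = vm φ (s m) := fun _ => rfl
  obtain ⟨h, hh, -⟩ := M.etale (Fin n → R) g
  let sf : M.carrier →ₛₗ[φ] (Fin n → R) := s.comp M.frob
  have hsf : ∀ m, sf m = s (M.frob m) := fun _ => rfl
  let X := LinearMap.toMatrix' (Fintype.linearCombination R (fun i => sf (f (Pi.single i 1))))
  have hX : ∀ x, X *ᵥ vm φ x = s (M.frob (f x)) := by
    intro x
    rw [← hsf, ← semi_lc, LinearMap.toMatrix'_mulVec]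
  let e := LinearMap.toMatrix' (s ∘ₗ f)
  have he : ∀ x, e *ᵥ x = s (f x) := fun x => by simp [e, LinearMap.toMatrix'_mulVec]
  let Y := LinearMap.toMatrix' (h ∘ₗ f)
  have hY : ∀ x, Y *ᵥ x = h (f x) := fun x => by simp [Y, LinearMap.toMatrix'_mulVec]
  refine ⟨n, f, s, X, Y, e, hs', fun x => (he x).symm, fun x => ?_, ?_, ?_, ?_, ?_⟩
  · rw [hX, hs']
  · refine mat_ext fun x => ?_
    rw [← mulVec_mulVec, hY, he]
    obtain ⟨h0, -, hu⟩ := M.etale (Fin n → R) sf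
    have := (hu (X.mulVecLin ∘ₗ h) (fun m => by
      simp only [LinearMap.comp_apply, hh, hg, mulVecLin_apply, hX, hs', hsf])).trans
      (hu s (fun m => rfl)).symm
    exact LinearMap.congr_fun this (f x)
  · refine mat_ext_vm φ fun x => ?_
    rw [← mulVec_mulVec, hX, hY, hs', hh, hg, ← vm_mulVec, he]
  · refine mat_ext_vm φ fun x => ?_
    rw [← mulVec_mulVec, hX, he, hs']
  · refine mat_ext fun x => ?_
    rw [← mulVec_mulVec, he, hY, hY, hs']
end

section
variable {R S : Type u} [CommRing R] [CommRing S] {σ : R →+* S} {ι : Type} [Fintype ι]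
  [DecidableEq ι]

lemma bc_pres {M N : Type u} [AddCommGroup M] [Module R M] [AddCommGroup N] [Module S N]
    (b : M →ₛₗ[σ] N) (hb : IsBaseChangeAlong σ M N b) (f : (ι → R) →ₗ[R] M)
    (s : M →ₗ[R] (ι → R)) (hfs : ∀ m, f (s m) = m) :
    ∃ (F : (ι → S) →ₗ[S] N) (G : N →ₗ[S] (ι → S)), (∀ x, F (vm σ x) = b (f x)) ∧
      (∀ m, G (b m) = vm σ (s m)) ∧ ∀ y, F (G y) = y := by
  let g : M →ₛₗ[σ] (ι → S) :=
    { toFun := fun m => vm σ (s m)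
      map_add' := by intros; ext; simp [vm]
      map_smul' := by intros; ext; simp [vm] }
  have hg : ∀ m, g m = vm σ (s m) := fun _ => rfl
  obtain ⟨G, hG, -⟩ := hb (ι → S) g
  refine ⟨Fintype.linearCombination S (fun i => b (f (Pi.single i 1))), G, semi_lc b f, hG, ?_⟩
  obtain ⟨h0, -, hu⟩ := hb N b
  have := (hu (Fintype.linearCombination S (fun i => b (f (Pi.single i 1))) ∘ₗ G) (fun m => by
    rw [LinearMap.comp_apply, hG, hg, semi_lc, hfs])).trans (hu LinearMap.id fun m => rfl).symm
  exact fun y => LinearMap.congr_fun this y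
end

section
variable {R S : Type u} [CommRing R] [CommRing S] {p : ℕ} {φ : R →+* R} {ψ : S →+* S}
    {u : ℕ → (R →+* S)}

lemma Tower.vm_comm (T : Tower p φ ψ u) {ι : Type*} (k) (x : ι → R) :
    vm ψ (vm (u k) x) = vm (u k) (vm φ x) := by
  ext; simp [vm, T.hφ]

theorem Tower.fullyFaithful (T : Tower p φ ψ u) (hR : IsAdicComplete (Ideal.span {(p : R)}) R)
    (hS : IsAdicComplete (Ideal.span {(p : S)}) S)
    (M₁ M₂ : EtaleModuleOver R φ) (N₁ N₂ : EtaleModuleOver S ψ)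
    (b₁ : M₁.carrier →ₛₗ[u 0] N₁.carrier) (b₂ : M₂.carrier →ₛₗ[u 0] N₂.carrier)
    (hb₁ : ∀ m, b₁ (M₁.frob m) = N₁.frob (b₁ m))
    (hb₂ : ∀ m, b₂ (M₂.frob m) = N₂.frob (b₂ m))
    (H₁ : IsBaseChangeAlong (u 0) M₁.carrier N₁.carrier b₁)
    (H₂ : IsBaseChangeAlong (u 0) M₂.carrier N₂.carrier b₂)
    (v : N₁.carrier →ₗ[S] N₂.carrier) (hv : ∀ x, v (N₁.frob x) = N₂.frob (v x)) :
    ∃! h : M₁.carrier →ₗ[R] M₂.carrier,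
      (∀ m, h (M₁.frob m) = M₂.frob (h m)) ∧ (∀ m, v (b₁ m) = b₂ (h m)) := by
  obtain ⟨n₁, f₁, s₁, X₁, Y₁, e₁, fs₁, sf₁, ff₁, XY₁, YX₁, eX₁, Ye₁⟩ := exists_pres M₁
  obtain ⟨n₂, f₂, s₂, X₂, Y₂, e₂, fs₂, sf₂, ff₂, XY₂, YX₂, eX₂, Ye₂⟩ := exists_pres M₂
  obtain ⟨F₁, G₁, hF₁, hG₁, FG₁⟩ := bc_pres b₁ H₁ f₁ s₁ fs₁
  obtain ⟨F₂, G₂, hF₂, hG₂, FG₂⟩ := bc_pres b₂ H₂ f₂ s₂ fs₂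
  -- `G ∘ F` is given by the matrix `e`
  have GF₂ : ∀ y, G₂ (F₂ y) = e₂.map (u 0) *ᵥ y := by
    have : G₂ ∘ₗ F₂ = (e₂.map (u 0)).mulVecLin := ext_vm (u 0) fun x => by
      rw [LinearMap.comp_apply, hF₂, hG₂, sf₂, vm_mulVec, mulVecLin_apply]
    exact fun y => LinearMap.congr_fun this y
  have GF₁ : ∀ y, G₁ (F₁ y) = e₁.map (u 0) *ᵥ y := by
    have : G₁ ∘ₗ F₁ = (e₁.map (u 0)).mulVecLin := ext_vm (u 0) fun x => by
      rw [LinearMap.comp_apply, hF₁, hG₁, sf₁, vm_mulVec, mulVecLin_apply]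
    exact fun y => LinearMap.congr_fun this y
  -- Frobenius in coordinates
  have frF : ∀ {n : ℕ} (M : EtaleModuleOver R φ) (N : EtaleModuleOver S ψ)
      (b : M.carrier →ₛₗ[u 0] N.carrier) (_ : ∀ m, b (M.frob m) = N.frob (b m))
      (f : (Fin n → R) →ₗ[R] M.carrier) (X : Matrix (Fin n) (Fin n) R)
      (_ : ∀ x, M.frob (f x) = f (X *ᵥ vm φ x)) (F : (Fin n → S) →ₗ[S] N.carrier)
      (_ : ∀ x, F (vm (u 0) x) = b (f x)) (y : Fin n → S),
      N.frob (F y) = F (X.map (u 0) *ᵥ vm ψ y) := by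
    intro n M N b hb f X hX F hF y
    rw [← semi_lc N.frob F y]
    have : Fintype.linearCombination S (fun i => N.frob (F (Pi.single i 1))) =
        F ∘ₗ (X.map (u 0)).mulVecLin := by
      refine ext_vm ((u 0).comp φ) fun x => ?_
      have e1 : vm ((u 0).comp φ) x = vm ψ (vm (u 0) x) := (T.vm_comm 0 x).symm
      rw [e1, semi_lc, hF, ← hb, hX, ← hF, vm_mulVec, T.vm_comm]
      rfl
    rw [this]; rfl
  have fr₁ := frF M₁ N₁ b₁ hb₁ f₁ X₁ ff₁ F₁ hF₁
  have fr₂ := frF M₂ N₂ b₂ hb₂ f₂ X₂ ff₂ F₂ hF₂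
  let H := LinearMap.toMatrix' (G₂ ∘ₗ v ∘ₗ F₁)
  have hH : ∀ y, H *ᵥ y = G₂ (v (F₁ y)) := fun y => by simp [H, LinearMap.toMatrix'_mulVec]
  have HX : H * X₁.map (u 0) = X₂.map (u 0) * H.map ψ := by
    refine mat_ext_vm ψ fun y => ?_
    rw [← mulVec_mulVec, hH, ← fr₁, hv, ← mulVec_mulVec, ← vm_mulVec, hH,
      ← FG₂ (v (F₁ y)), fr₂, GF₂, FG₂, mulVec_mulVec, ← Matrix.map_mul, eX₂]
  have He : H * e₁.map (u 0) = H := by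
    refine mat_ext fun y => ?_
    rw [← mulVec_mulVec, hH, ← GF₁, FG₁, hH]
  have HH : X₂.map (u 0) * H.map ψ * Y₁.map (u 0) = H := by
    rw [← HX, Matrix.mul_assoc, ← Matrix.map_mul, XY₁, He]
  obtain ⟨K, hK, hKH⟩ := T.ff_exists hR hS X₂ Y₁ H HH
  refine ⟨f₂ ∘ₗ K.mulVecLin ∘ₗ s₁, ⟨fun m => ?_, fun m => ?_⟩, ?_⟩
  · simp only [LinearMap.comp_apply, mulVecLin_apply]
    have : s₁ (M₁.frob m) = X₁ *ᵥ vm φ (s₁ m) := by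
      conv_lhs => rw [← fs₁ m, ff₁, sf₁, mulVec_mulVec, eX₁]
    rw [this, ff₂, mulVec_mulVec]
    conv_lhs => rw [← hK]
    rw [Matrix.mul_assoc, Matrix.mul_assoc, YX₁, ← Matrix.map_mul, ← mulVec_mulVec, ← vm_mulVec,
      ← mulVec_mulVec, ← sf₁, fs₁]
  · simp only [LinearMap.comp_apply, mulVecLin_apply]
    rw [← hF₂, vm_mulVec, hKH, hH, FG₂, hF₁, fs₁]
  · rintro h ⟨h1, h2⟩
    let L := LinearMap.toMatrix' (s₂ ∘ₗ h ∘ₗ f₁)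
    have hL : ∀ y, L *ᵥ y = s₂ (h (f₁ y)) := fun y => by simp [L, LinearMap.toMatrix'_mulVec]
    have LX : L * X₁ = X₂ * L.map φ := by
      refine mat_ext_vm φ fun y => ?_
      rw [← mulVec_mulVec, hL, ← ff₁, h1, ← mulVec_mulVec, ← vm_mulVec, hL,
        ← fs₂ (h (f₁ y)), ff₂, sf₂, fs₂, mulVec_mulVec, eX₂]
    have Le : L * e₁ = L := by
      refine mat_ext fun y => ?_
      rw [← mulVec_mulVec, hL, ← sf₁, fs₁, hL]
    have LL : X₂ * L.map φ * Y₁ = L := by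
      rw [← LX, Matrix.mul_assoc, XY₁, Le]
    have : L = K := by
      refine T.ff_unique hR X₂ Y₁ L K LL hK ?_
      rw [hKH]
      refine mat_ext_vm (u 0) fun x => ?_
      rw [← vm_mulVec, hL, hH, ← hG₂, ← h2, hF₁]
    ext m
    simp only [LinearMap.comp_apply, mulVecLin_apply]
    rw [← this, hL, fs₂, fs₁]

/-- The étale module cut out by an idempotent. -/
lemma exists_of_idem {ι : Type} [Fintype ι] [DecidableEq ι]
    (Z ε : Matrix ι ι R) (hZ : IsUnit Z) (hε : ε * ε = ε) (hεZ : ε * Z = Z * ε.map φ) :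
    ∃ (M : EtaleModuleOver R φ) (f : (ι → R) →ₗ[R] M.carrier) (s : M.carrier →ₗ[R] (ι → R)),
      (∀ m, f (s m) = m) ∧ (∀ x, s (f x) = ε *ᵥ x) ∧ (∀ m, s (M.frob m) = Z *ᵥ vm φ (s m)) := by
  obtain ⟨U, rfl⟩ := hZ
  let C := LinearMap.range ε.mulVecLin
  let s : C →ₗ[R] (ι → R) := C.subtype
  let f : (ι → R) →ₗ[R] C := ε.mulVecLin.rangeRestrict
  have hsinj : Function.Injective s := Subtype.val_injective
  have sf : ∀ x, s (f x) = ε *ᵥ x := fun x => rfl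
  have εs : ∀ m, ε *ᵥ (s m) = s m := by
    rintro ⟨_, x, rfl⟩
    change ε *ᵥ (ε *ᵥ x) = ε *ᵥ x
    rw [mulVec_mulVec, hε]
  have fs : ∀ m, f (s m) = m := fun m => hsinj (by rw [sf, εs])
  let fr : C →ₛₗ[φ] C :=
    { toFun := fun m => f ((U : Matrix ι ι R) *ᵥ vm φ (s m))
      map_add' := by
        intro x y
        rw [← map_add, ← mulVec_add]; congr 2; ext; simp [vm]
      map_smul' := by
        intro r x
        rw [← map_smul, ← mulVec_smul]; congr 2; ext; simp [vm] }
  have hfr' : ∀ m, fr m = f ((U : Matrix ι ι R) *ᵥ vm φ (s m)) := fun _ => rfl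
  have hfr : ∀ m, s (fr m) = (U : Matrix ι ι R) *ᵥ vm φ (s m) := fun m => by
    rw [hfr', sf, mulVec_mulVec, hεZ, ← mulVec_mulVec, ← vm_mulVec, εs]
  have et : ∀ (T : Type u) [AddCommGroup T] [Module R T] (g : C →ₛₗ[φ] T),
      ∃! h : C →ₗ[R] T, ∀ m, h (fr m) = g m := by
    intro T _ _ g
    refine ⟨Fintype.linearCombination R (fun i => g (f (Pi.single i 1))) ∘ₗ
      ((U⁻¹ : (Matrix ι ι R)ˣ) : Matrix ι ι R).mulVecLin ∘ₗ s, fun m => ?_, ?_⟩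
    · simp only [LinearMap.comp_apply, mulVecLin_apply]
      rw [hfr, mulVec_mulVec, Units.inv_mul, one_mulVec, semi_lc, fs]
    · intro h hh
      have : h ∘ₗ f ∘ₗ (U : Matrix ι ι R).mulVecLin =
          Fintype.linearCombination R (fun i => g (f (Pi.single i 1))) := by
        refine ext_vm φ fun x => ?_
        rw [semi_lc, ← hh]
        simp only [LinearMap.comp_apply, mulVecLin_apply]
        congr 1
        apply hsinj
        rw [hfr, sf, sf, vm_mulVec, mulVec_mulVec, mulVec_mulVec, hεZ]
      rw [← this]
      ext m
      simp only [LinearMap.comp_apply, mulVecLin_apply]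
      rw [mulVec_mulVec, Units.mul_inv, one_mulVec, fs]
  exact ⟨⟨C, Module.Finite.of_surjective f fun m => ⟨s m, fs m⟩,
    Module.Projective.of_split s f (LinearMap.ext fs), fr, et⟩, f, s, fs, sf, hfr⟩

theorem Tower.essSurj (T : Tower p φ ψ u) (hR : IsAdicComplete (Ideal.span {(p : R)}) R)
    (hS : IsAdicComplete (Ideal.span {(p : S)}) S) (N : EtaleModuleOver S ψ) :
    ∃ (M : EtaleModuleOver R φ) (b : M.carrier →ₛₗ[u 0] N.carrier),
        (∀ m, b (M.frob m) = N.frob (b m)) ∧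
          IsBaseChangeAlong (u 0) M.carrier N.carrier b := by
  obtain ⟨n, f, s, X, Y, e, fs, sf, ff, XY, YX, eX, Ye⟩ := exists_pres N
  have ee : e * e = e := by rw [← XY, ← Matrix.mul_assoc, XY, eX, XY]
  have Xe : X * e.map ψ = X := by rw [← YX, ← Matrix.mul_assoc, XY, eX]
  have eY : e.map ψ * Y = Y := by rw [← YX, Matrix.mul_assoc, XY, Ye]
  have ee' : e.map ψ * e.map ψ = e.map ψ := by rw [← Matrix.map_mul, ee]
  let X' : Matrix (Fin n ⊕ Fin n) (Fin n ⊕ Fin n) S := fromBlocks X (1 - e) (1 - e.map ψ) Y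
  let Y' : Matrix (Fin n ⊕ Fin n) (Fin n ⊕ Fin n) S := fromBlocks Y (1 - e.map ψ) (1 - e) X
  have h1 : X' * Y' = 1 := by
    simp only [X', Y', fromBlocks_multiply, ← fromBlocks_one]
    congr 1 <;> simp only [mul_sub, sub_mul, mul_one, one_mul, XY, YX, eX, Ye, Xe, eY, ee, ee'] <;>
      abel
  have h2 : Y' * X' = 1 := by
    simp only [X', Y', fromBlocks_multiply, ← fromBlocks_one]
    congr 1 <;> simp only [mul_sub, sub_mul, mul_one, one_mul, XY, YX, eX, Ye, Xe, eY, ee, ee'] <;>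
      abel
  obtain ⟨C, Z, hC, hZ, hCZ⟩ := T.descend hR hS X' ⟨⟨X', Y', h1, h2⟩, rfl⟩
  obtain ⟨V, rfl⟩ := hC
  -- the new presentation
  let pr : (Fin n ⊕ Fin n → S) →ₗ[S] (Fin n → S) := LinearMap.funLeft S S Sum.inl
  let inj : (Fin n → S) →ₗ[S] (Fin n ⊕ Fin n → S) :=
    (fromRows (1 : Matrix (Fin n) (Fin n) S) (0 : Matrix (Fin n) (Fin n) S)).mulVecLin
  have pri : ∀ x, pr (inj x) = x := by
    intro x; ext i
    simp [pr, inj, LinearMap.funLeft_apply, fromRows_mulVec]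
  let f' := f ∘ₗ pr ∘ₗ ((V⁻¹ : (Matrix (Fin n ⊕ Fin n) (Fin n ⊕ Fin n) S)ˣ) :
    Matrix (Fin n ⊕ Fin n) (Fin n ⊕ Fin n) S).mulVecLin
  let s' := (V : Matrix (Fin n ⊕ Fin n) (Fin n ⊕ Fin n) S).mulVecLin ∘ₗ inj ∘ₗ s
  have fs' : ∀ m, f' (s' m) = m := by
    intro m
    simp only [f', s', LinearMap.comp_apply, mulVecLin_apply]
    rw [mulVec_mulVec, Units.inv_mul, one_mulVec, pri, fs]
  have ff' : ∀ x, N.frob (f' x) = f' (Z.map (u 0) *ᵥ vm ψ x) := by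
    intro x
    obtain ⟨w, rfl⟩ : ∃ w, x = (V : Matrix (Fin n ⊕ Fin n) (Fin n ⊕ Fin n) S) *ᵥ w :=
      ⟨((V⁻¹ : (Matrix (Fin n ⊕ Fin n) (Fin n ⊕ Fin n) S)ˣ) :
        Matrix (Fin n ⊕ Fin n) (Fin n ⊕ Fin n) S) *ᵥ x, by
        rw [mulVec_mulVec, Units.mul_inv, one_mulVec]⟩
    rw [vm_mulVec, mulVec_mulVec, ← hCZ]
    simp only [f', LinearMap.comp_apply, mulVecLin_apply]
    rw [mulVec_mulVec, Units.inv_mul, one_mulVec, mulVec_mulVec, Units.inv_mul_cancel_left, ff]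
    have : pr (X' *ᵥ vm ψ w) = X *ᵥ vm ψ (pr w) + (1 - e) *ᵥ vm ψ (w ∘ Sum.inr) := by
      ext i
      simp [pr, X', LinearMap.funLeft_apply, fromBlocks_mulVec]
      rfl
    rw [this, map_add, sub_mulVec, one_mulVec, map_sub, ← sf, fs, sub_self, add_zero]
  let e' := LinearMap.toMatrix' (s' ∘ₗ f')
  have sf' : ∀ x, s' (f' x) = e' *ᵥ x := fun x => by simp [e', LinearMap.toMatrix'_mulVec]
  have ee2 : e' * e' = e' := mat_ext fun x => by
    rw [← mulVec_mulVec, ← sf', ← sf', fs']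
  have Ve : (V : Matrix (Fin n ⊕ Fin n) (Fin n ⊕ Fin n) S) * fromBlocks e 0 0 0 =
      e' * (V : Matrix (Fin n ⊕ Fin n) (Fin n ⊕ Fin n) S) := by
    refine mat_ext fun x => ?_
    rw [← mulVec_mulVec, ← mulVec_mulVec, ← sf']
    simp only [f', s', LinearMap.comp_apply, mulVecLin_apply]
    rw [mulVec_mulVec x (V⁻¹ : (Matrix (Fin n ⊕ Fin n) (Fin n ⊕ Fin n) S)ˣ).val, Units.inv_mul, one_mulVec, sf]
    congr 1
    ext (i | i) <;> simp [inj, pr, fromBlocks_mulVec, fromRows_mulVec] 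
    rfl
  have eX' : fromBlocks e 0 0 0 * X' = X' * (fromBlocks e 0 0 0 : Matrix (Fin n ⊕ Fin n) (Fin n ⊕ Fin n) S).map ψ := by
    have : (fromBlocks e 0 0 0 : Matrix (Fin n ⊕ Fin n) (Fin n ⊕ Fin n) S).map ψ =
      fromBlocks (e.map ψ) 0 0 0 := by
      rw [fromBlocks_map]; congr 1 <;> ext <;> simp
    rw [this]
    simp only [X', fromBlocks_multiply]
    congr 1 <;> simp [mul_sub, sub_mul, eX, Xe, ee, ee']
  have eZ : e' * Z.map (u 0) = Z.map (u 0) * e'.map ψ := by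
    have hu : IsUnit ((V : Matrix (Fin n ⊕ Fin n) (Fin n ⊕ Fin n) S).map ψ) :=
      isUnit_map V.isUnit ψ
    refine hu.mul_left_injective ?_
    change e' * Z.map (u 0) * _ = Z.map (u 0) * e'.map ψ * _
    rw [mul_assoc, ← hCZ, ← mul_assoc, ← Ve, mul_assoc, eX', ← mul_assoc, hCZ, mul_assoc,
      ← Matrix.map_mul, Ve, Matrix.map_mul, ← mul_assoc]
  have hZ' := hZ
  obtain ⟨W, hW⟩ := hZ'
  have ZW : Z * ((W⁻¹ : (Matrix (Fin n ⊕ Fin n) (Fin n ⊕ Fin n) R)ˣ) :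
      Matrix (Fin n ⊕ Fin n) (Fin n ⊕ Fin n) R) = 1 := by
    rw [← hW, Units.mul_inv]
  generalize ((W⁻¹ : (Matrix (Fin n ⊕ Fin n) (Fin n ⊕ Fin n) R)ˣ) :
      Matrix (Fin n ⊕ Fin n) (Fin n ⊕ Fin n) R) = ZI at ZW
  have WZ : ZI * Z = 1 := mul_eq_one_comm.1 ZW
  obtain ⟨ε, hε, hεe⟩ := T.ff_exists hR hS Z ZI e' (by
    rw [← eZ, mul_assoc, ← Matrix.map_mul, ZW]; simp)
  have hεZ : ε * Z = Z * ε.map φ := by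
    conv_lhs => rw [← hε]
    rw [mul_assoc, WZ, mul_one]
  have hεε : ε * ε = ε := by
    refine T.ff_unique hR Z ZI _ _ ?_ hε ?_
    · rw [Matrix.map_mul, ← mul_assoc, ← hεZ, mul_assoc ε, ← hεZ, mul_assoc, mul_assoc, ZW, mul_one]
    · rw [Matrix.map_mul, hεe, ee2]
  obtain ⟨M, g, t, gt, tg, ht⟩ := exists_of_idem (φ := φ) Z ε hZ hεε hεZ
  let b : M.carrier →ₛₗ[u 0] N.carrier :=
    { toFun := fun m => f' (vm (u 0) (t m))
      map_add' := by
        intro x y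
        rw [← map_add]; congr 1; ext; simp [vm]
      map_smul' := by
        intro r x
        rw [← map_smul]; congr 1; ext; simp [vm] }
  have hb : ∀ m, b m = f' (vm (u 0) (t m)) := fun _ => rfl
  have s'b : ∀ m, s' (b m) = vm (u 0) (t m) := by
    intro m
    rw [hb, sf', ← hεe, ← vm_mulVec, ← tg, gt]
  refine ⟨M, b, fun m => ?_, ?_⟩
  · rw [hb, hb, ff', ht, vm_mulVec, T.vm_comm]
  · intro Q _ _ v
    refine ⟨Fintype.linearCombination S (fun i => v (g (Pi.single i 1))) ∘ₗ s', fun m => ?_, ?_⟩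
    · rw [LinearMap.comp_apply, s'b, semi_lc, gt]
    · intro h hh
      have : h ∘ₗ f' = Fintype.linearCombination S (fun i => v (g (Pi.single i 1))) := by
        refine ext_vm (u 0) fun x => ?_
        rw [semi_lc, ← hh, LinearMap.comp_apply, hb, tg, vm_mulVec, hεe, ← sf', fs']
      rw [← this]
      ext m
      rw [LinearMap.comp_apply, LinearMap.comp_apply, fs']
end

section
variable {R A S : Type u} [CommRing R] [CommRing A] [CommRing S]

lemma colim_facts (φ : R →+* R) (ι : ℕ → (R →+* A))
    (hι : ∀ n, (ι (n + 1)).comp φ = ι n)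
    (hUP : ∀ (T : Type u) [CommRing T] (u : ℕ → (R →+* T)),
      (∀ n, (u (n + 1)).comp φ = u n) → ∃! v : A →+* T, ∀ n, v.comp (ι n) = u n) :
    (∀ a, ∃ k r, a = ι k r) ∧ (∀ k r, ι k r = 0 → ∃ j, pw φ j r = 0) := by
  let F : ∀ i j : ℕ, i ≤ j → R →+* R := fun i j _ => pw φ (j - i)
  have hF : ∀ i j h, F i j h = pw φ (j - i) := fun _ _ _ => rfl
  have : DirectedSystem (fun _ : ℕ => R) (fun i j h => F i j h) :=
    { map_self := fun i x => by simp [hF]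
      map_map := fun k j i h1 h2 x => by
        simp only [hF]; rw [← pw_add]; congr 2; omega }
  let D := Ring.DirectLimit (fun _ : ℕ => R) (fun i j h => F i j h)
  let o : ∀ k, R →+* D := fun k => Ring.DirectLimit.of (fun _ : ℕ => R) (fun i j h => F i j h) k
  have ho : ∀ k, (o (k + 1)).comp φ = o k := by
    intro k
    ext r
    have := Ring.DirectLimit.of_f (G := fun _ : ℕ => R) (f := fun i j h => F i j h)
      (Nat.le_succ k) r
    rw [← show _ = o k r from this]
    simp only [hF, Nat.succ_eq_add_one, Nat.add_sub_cancel_left, RingHom.comp_apply]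
    rfl
  obtain ⟨v, hv, -⟩ := hUP D o ho
  have hιF : ∀ i j r, ι (i + j) (pw φ j r) = ι i r := by
    intro i j
    induction j with
    | zero => intro r; simp
    | succ j ih =>
      intro r
      rw [pw_succ', ← ih, ← hι (i + j)]; rfl
  let w : D →+* A := Ring.DirectLimit.lift (fun _ : ℕ => R) (fun i j h => F i j h) A ι (by
    intro i j h r
    obtain ⟨d, rfl⟩ := Nat.exists_eq_add_of_le h
    simp only [hF]; rw [Nat.add_sub_cancel_left, hιF])
  have hw : ∀ k r, w (o k r) = ι k r := fun k r => Ring.DirectLimit.lift_of ..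
  have hwv : ∀ a, w (v a) = a := by
    obtain ⟨z, -, hz⟩ := hUP A ι hι
    have := (hz (w.comp v) (fun n => by
      ext r
      have := RingHom.congr_fun (hv n) r
      simp only [RingHom.comp_apply] at this ⊢
      rw [this, hw])).trans (hz (RingHom.id A) (fun n => rfl)).symm
    exact fun a => RingHom.congr_fun this a
  constructor
  · intro a
    obtain ⟨k, r, hr⟩ := Ring.DirectLimit.exists_of (v a)
    exact ⟨k, r, by rw [← hwv a, ← hr, ← hw]⟩
  · intro k r h
    have h0 : o k r = 0 := by
      have := RingHom.congr_fun (hv k) r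
      rw [← this, RingHom.comp_apply, h, map_zero]
    obtain ⟨j, hj, h1⟩ := Ring.DirectLimit.of.zero_exact h0
    exact ⟨j - k, h1⟩
end
end PhiAux

/-- Let `p` be a prime and `R` a `p`-adically complete commutative ring with a ring
endomorphism `φ`.  Let `A = colim_φ R` be the direct limit of `R →φ R →φ ⋯` (encoded
by a cocone `ι n : R → A` with `ι (n+1) ∘ φ = ι n` and the universal property of the
colimit) with induced endomorphism `φA`, and let `S` be the `p`-adic completion of `A`
(encoded by `c : A → S` with `S` `p`-adically complete and `A/pⁿ ≅ S/pⁿ` for all `n`)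
with its induced endomorphism `φS` (characterized by `φS ∘ c = c ∘ φA`).  Then base
change along the canonical map `c ∘ ι 0 : R → S` induces an equivalence from étale
`φ`-modules over `R` to étale `φ`-modules over `S`: it is essentially surjective and
fully faithful. -/
theorem etale_phi_modules_equivalence_over_completed_perfection
    {R A S : Type u} [CommRing R] [CommRing A] [CommRing S]
    (p : ℕ) (hp : p.Prime)
    (φ : R →+* R) (hRcomplete : IsAdicComplete (Ideal.span {(p : R)}) R)
    (φA : A →+* A) (ι : ℕ → (R →+* A))
    (hι : ∀ n, (ι (n + 1)).comp φ = ι n)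
    (hUP : ∀ (T : Type u) [CommRing T] (u : ℕ → (R →+* T)),
      (∀ n, (u (n + 1)).comp φ = u n) → ∃! v : A →+* T, ∀ n, v.comp (ι n) = u n)
    (hφA : ∀ n, φA.comp (ι n) = (ι n).comp φ)
    (c : A →+* S) (φS : S →+* S)
    (hφS : φS.comp c = c.comp φA)
    (hScomplete : IsAdicComplete (Ideal.span {(p : S)}) S)
    (hmodsurj : ∀ (s : S) (n : ℕ), ∃ a : A, s - c a ∈ Ideal.span {(p : S) ^ n})
    (hmodinj : ∀ (a : A) (n : ℕ),
      c a ∈ Ideal.span {(p : S) ^ n} → a ∈ Ideal.span {(p : A) ^ n}) :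
    (∀ N : EtaleModuleOver S φS,
      ∃ (M : EtaleModuleOver R φ) (b : M.carrier →ₛₗ[c.comp (ι 0)] N.carrier),
        (∀ m, b (M.frob m) = N.frob (b m)) ∧
          IsBaseChangeAlong (c.comp (ι 0)) M.carrier N.carrier b) ∧
    (∀ (M₁ M₂ : EtaleModuleOver R φ) (N₁ N₂ : EtaleModuleOver S φS)
      (b₁ : M₁.carrier →ₛₗ[c.comp (ι 0)] N₁.carrier)
      (b₂ : M₂.carrier →ₛₗ[c.comp (ι 0)] N₂.carrier),
      (∀ m, b₁ (M₁.frob m) = N₁.frob (b₁ m)) →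
      (∀ m, b₂ (M₂.frob m) = N₂.frob (b₂ m)) →
      IsBaseChangeAlong (c.comp (ι 0)) M₁.carrier N₁.carrier b₁ →
      IsBaseChangeAlong (c.comp (ι 0)) M₂.carrier N₂.carrier b₂ →
      ∀ v : N₁.carrier →ₗ[S] N₂.carrier, (∀ x, v (N₁.frob x) = N₂.frob (v x)) →
        ∃! h : M₁.carrier →ₗ[R] M₂.carrier,
          (∀ m, h (M₁.frob m) = M₂.frob (h m)) ∧ (∀ m, v (b₁ m) = b₂ (h m))) := by
  have hA := PhiAux.colim_facts φ ι hι hUP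
  have T : PhiAux.Tower p φ φS (fun k => c.comp (ι k)) := by
    refine ⟨fun k r => ?_, fun k r => ?_, fun N s => ?_, fun N k r h => ?_⟩
    · simp only [RingHom.comp_apply]
      rw [← hι k]; rfl
    · have h1 := RingHom.congr_fun hφS (ι k r)
      have h2 := RingHom.congr_fun (hφA k) r
      simp only [RingHom.comp_apply] at h1 h2 ⊢
      rw [h1, h2]
    · obtain ⟨a, ha⟩ := hmodsurj s N
      obtain ⟨k, r, rfl⟩ := hA.1 a
      exact ⟨k, r, Ideal.mem_span_singleton.1 ha⟩
    · have h1 := Ideal.mem_span_singleton.1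
        (hmodinj (ι k r) N (Ideal.mem_span_singleton.2 h))
      obtain ⟨a, ha⟩ := h1
      obtain ⟨l, t, rfl⟩ := hA.1 a
      have hιF : ∀ i j r, ι (i + j) (PhiAux.pw φ j r) = ι i r := by
        intro i j
        induction j with
        | zero => intro r; simp
        | succ j ih =>
          intro r
          rw [PhiAux.pw_succ', ← ih, ← hι (i + j)]; rfl
      have h2 : ι (k + l) (PhiAux.pw φ l r - (p : R) ^ N * PhiAux.pw φ k t) = 0 := by
        rw [map_sub, map_mul, hιF, add_comm k l, hιF, ha]
        simp
      obtain ⟨j, hj⟩ := hA.2 _ _ h2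
      refine ⟨j + l, PhiAux.pw φ j (PhiAux.pw φ k t), ?_⟩
      rw [map_sub, sub_eq_zero] at hj
      rw [PhiAux.pw_add, hj]
      simp
  exact ⟨T.essSurj hRcomplete hScomplete, T.fullyFaithful hRcomplete hScomplete⟩
end
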